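/- arXiv:1304.1274 — 16 statements merged into one kernel-verified Lean document; each statement's English description precedes it below -/
import Mathlib

section
/- (Inequality Lemma) Let G be a group acting on a set X, let A ⊆ Y ⊆ X, and let a ∈ G and a family of elements a₀, …, a_{n-1} ∈ G be such that: Y = A ∪ a • A; the sets a₀ • A, …, a_{n-1} • A are pairwise disjoint; and Y is invariant under a and under each aᵢ (i.e., a • Y = Y and aᵢ • Y = Y). Then for all indices i, j, ℓ ∈ {0, …, n-1} with i ≠ j, one has (a_ℓ a⁻¹ a_j⁻¹) • (a_i • A) ⊆ a_ℓ • A and (a_ℓ a a_j⁻¹) • (a_i • A) ⊆ a_ℓ • A. -/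
open Pointwise

theorem stmt_1 {G X : Type*} [Group G] [MulAction G X]
    (A Y : Set X) (hAY : A ⊆ Y) (n : ℕ)
    (a : G) (b : Fin n → G)
    (hY : Y = A ∪ a • A)
    (hdisj : ∀ i j : Fin n, i ≠ j → Disjoint (b i • A) (b j • A))
    (ha : a • Y = Y) (hb : ∀ i : Fin n, b i • Y = Y) :
    ∀ i j l : Fin n, i ≠ j →
      (b l * a⁻¹ * (b j)⁻¹) • (b i • A) ⊆ b l • A ∧
      (b l * a * (b j)⁻¹) • (b i • A) ⊆ b l • A := by
  intro i j l hij
  have key : ∀ x ∈ A, (b j)⁻¹ • b i • x ∈ Y ∧ (b j)⁻¹ • b i • x ∉ A := by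
    intro x hx
    constructor
    · rw [← Set.mem_smul_set_iff_inv_smul_mem, hb j, ← hb i]
      exact Set.smul_mem_smul_set (hAY hx)
    · intro h
      rw [← Set.mem_smul_set_iff_inv_smul_mem] at h
      exact Set.disjoint_left.mp (hdisj i j hij) (Set.smul_mem_smul_set hx) h
  constructor
  · rintro _ ⟨_, ⟨x, hx, rfl⟩, rfl⟩
    obtain ⟨h1, h2⟩ := key x hx
    simp only [mul_smul]
    apply Set.smul_mem_smul_set
    rw [hY] at h1
    rw [← Set.mem_smul_set_iff_inv_smul_mem]
    exact h1.resolve_left h2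
  · rintro _ ⟨_, ⟨x, hx, rfl⟩, rfl⟩
    obtain ⟨h1, h2⟩ := key x hx
    simp only [mul_smul]
    apply Set.smul_mem_smul_set
    have h3 : a • (b j)⁻¹ • b i • x ∈ Y := by
      rw [← ha]
      exact Set.smul_mem_smul_set h1
    rw [hY] at h3
    exact h3.resolve_right (fun h => h2 (Set.smul_mem_smul_set_iff.mp h))
end

section
/- Let G be a group acting on a set X, let A ⊆ Y ⊆ X, let n ≥ 3, and let a, a₀, …, a_{n-1} ∈ G be such that: Y = A ∪ a • A; the sets a₀ • A, …, a_{n-1} • A are pairwise disjoint; and Y is invariant under a and under each aᵢ. Then the n+1 sets a₀ • A, a₁ • A, …, a_{n-2} • A, (a_{n-1} a a_{n-1}⁻¹ a₀) • A, (a_{n-1} a a_{n-1}⁻¹ a₁) • A are pairwise disjoint, and Y is invariant under each of the n+1 elements a₀, …, a_{n-2}, a_{n-1} a a_{n-1}⁻¹ a₀, a_{n-1} a a_{n-1}⁻¹ a₁. -/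
open Pointwise

theorem stmt_2 {G X : Type*} [Group G] [MulAction G X]
    (A Y : Set X) (hAY : A ⊆ Y) (n : ℕ) (hn : 3 ≤ n)
    (a : G) (b : Fin n → G)
    (hY : Y = A ∪ a • A)
    (hdisj : ∀ i j : Fin n, i ≠ j → Disjoint (b i • A) (b j • A))
    (ha : a • Y = Y) (hb : ∀ i : Fin n, b i • Y = Y)
    (c : Fin (n + 1) → G)
    (hc : ∀ i : Fin (n + 1), c i =
      if h : (i : ℕ) < n - 1 then b ⟨i, by omega⟩
      else if (i : ℕ) = n - 1 then
        b ⟨n - 1, by omega⟩ * a * (b ⟨n - 1, by omega⟩)⁻¹ * b ⟨0, by omega⟩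
      else
        b ⟨n - 1, by omega⟩ * a * (b ⟨n - 1, by omega⟩)⁻¹ * b ⟨1, by omega⟩) :
    (∀ i j : Fin (n + 1), i ≠ j → Disjoint (c i • A) (c j • A)) ∧
    (∀ i : Fin (n + 1), c i • Y = Y) := by
  obtain ⟨d, hd⟩ : ∃ d, d = b ⟨n - 1, by omega⟩ := ⟨_, rfl⟩
  have hdY : d • Y = Y := by rw [hd]; exact hb _
  have hdi : d⁻¹ • Y = Y := by rw [inv_smul_eq_iff, hdY]
  have hdd : ∀ j : Fin n, (j : ℕ) < n - 1 → Disjoint (b j • A) (d • A) := by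
    intro j hj
    rw [hd]
    apply hdisj
    intro h
    rw [h] at hj
    simp at hj
  simp only [← hd] at hc
  have hsub : ∀ j : Fin n, (j : ℕ) < n - 1 → b j • A ⊆ (d * a) • A := by
    intro j hj x hx
    have h1 : x ∈ d • Y := by
      rw [hdY, ← hb j]
      exact Set.smul_set_mono hAY hx
    rw [hY, Set.smul_set_union, smul_smul] at h1
    rcases h1 with h1 | h1
    · exact absurd h1 (Set.disjoint_left.mp (hdd j hj) hx)
    · exact h1
  have key : ∀ j k : Fin n, (j : ℕ) < n - 1 → (k : ℕ) < n - 1 →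
      Disjoint (b j • A) ((d * a * d⁻¹ * b k) • A) := by
    intro j k hj hk
    refine Disjoint.mono_left (hsub j hj) ?_
    have h2 : d * a = d * a * d⁻¹ * d := by group
    have h3 : (d * a) • A = (d * a * d⁻¹) • (d • A) := by rw [smul_smul, ← h2]
    rw [h3, ← smul_smul _ (b k), Set.disjoint_smul_set]
    exact (hdd k hk).symm
  have h01 : Disjoint ((d * a * d⁻¹ * b ⟨0, by omega⟩) • A)
      ((d * a * d⁻¹ * b ⟨1, by omega⟩) • A) := by
    rw [← smul_smul _ (b _), ← smul_smul _ (b _), Set.disjoint_smul_set]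
    apply hdisj
    simp
  have hgY : ∀ k : Fin n, (d * a * d⁻¹ * b k) • Y = Y := by
    intro k
    rw [← smul_smul, hb, ← smul_smul, hdi, ← smul_smul, ha, hdY]
  constructor
  · have main : ∀ i j : Fin (n + 1), i < j → Disjoint (c i • A) (c j • A) := by
      intro i j hij
      have hij' : (i : ℕ) < j := hij
      have hj := j.isLt
      rw [hc i, hc j]
      by_cases hi1 : (i : ℕ) < n - 1
      · rw [dif_pos hi1]
        by_cases hj1 : (j : ℕ) < n - 1
        · rw [dif_pos hj1]
          apply hdisj
          intro h
          have := congrArg Fin.val h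
          simp at this
          omega
        · rw [dif_neg hj1]
          split_ifs
          · exact key _ _ hi1 (by simp; omega)
          · exact key _ _ hi1 (by simp; omega)
      · rw [dif_neg hi1, if_pos (by omega), dif_neg (by omega), if_neg (by omega)]
        exact h01
    intro i j hij
    rcases lt_or_gt_of_ne hij with h | h
    · exact main i j h
    · exact (main j i h).symm
  · intro i
    rw [hc i]
    split_ifs
    · exact hb _
    · exact hgY _
    · exact hgY _
end

section
/- Let G be a group acting on a set X, and let A ⊆ Y ⊆ X with A nonempty. Suppose there exist elements a, a₀, a₁, a₂ ∈ G such that Y = A ∪ a • A, the sets a₀ • A, a₁ • A, a₂ • A are pairwise disjoint, and Y is invariant under a, a₀, a₁, a₂. Then for every n ≥ 3 there exist elements b₀, …, b_{n-1} ∈ G such that the sets b₀ • A, …, b_{n-1} • A are pairwise disjoint and Y is invariant under a and under each bᵢ. -/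
open Pointwise

theorem stmt_3 {G X : Type*} [Group G] [MulAction G X]
    (A Y : Set X) (hA : A.Nonempty) (hAY : A ⊆ Y)
    (a a0 a1 a2 : G)
    (hY : Y = A ∪ a • A)
    (h01 : Disjoint (a0 • A) (a1 • A))
    (h02 : Disjoint (a0 • A) (a2 • A))
    (h12 : Disjoint (a1 • A) (a2 • A))
    (ha : a • Y = Y) (ha0 : a0 • Y = Y) (ha1 : a1 • Y = Y) (ha2 : a2 • Y = Y) :
    ∀ n : ℕ, 3 ≤ n → ∃ b : Fin n → G,
      (∀ i j : Fin n, i ≠ j → Disjoint (b i • A) (b j • A)) ∧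
      a • Y = Y ∧ (∀ i : Fin n, b i • Y = Y) := by
  have key : ∀ c : G, c • Y = Y → Disjoint (a0 • A) (c • A) → (a⁻¹ * (a0⁻¹ * c)) • A ⊆ A := by
    intro c hc hd
    have h1 : (a0⁻¹ * c) • A ⊆ Y := by
      calc (a0⁻¹ * c) • A ⊆ (a0⁻¹ * c) • Y := Set.smul_set_mono hAY
        _ = Y := by rw [mul_smul, hc, inv_smul_eq_iff, ha0]
    have h2 : Disjoint A ((a0⁻¹ * c) • A) := by
      rw [mul_smul, ← Set.disjoint_smul_set (a := a0), smul_inv_smul]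
      exact hd
    rw [mul_smul, Set.smul_set_subset_iff_subset_inv_smul_set, inv_inv]
    intro x hx
    have h3 := h1 hx
    rw [hY] at h3
    rcases h3 with h3 | h3
    · exact absurd hx (Set.disjoint_left.mp h2 h3)
    · exact h3
  have inv : ∀ c : G, c • Y = Y → (a⁻¹ * (a0⁻¹ * c)) • Y = Y := by
    intro c hc
    rw [mul_smul, mul_smul, hc, inv_smul_eq_iff, inv_smul_eq_iff, ha, ha0]
  have k1 := key a1 ha1 h01
  have k2 := key a2 ha2 h02
  have i1 := inv a1 ha1
  have i2 := inv a2 ha2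
  have hd : Disjoint ((a⁻¹ * (a0⁻¹ * a1)) • A) ((a⁻¹ * (a0⁻¹ * a2)) • A) := by
    simp only [mul_smul, Set.disjoint_smul_set]
    exact h12
  generalize a⁻¹ * (a0⁻¹ * a1) = d at *
  generalize a⁻¹ * (a0⁻¹ * a2) = e at *
  have kp : ∀ m : ℕ, d ^ m • A ⊆ A := by
    intro m
    induction m with
    | zero => simp
    | succ m ih =>
      rw [pow_succ, mul_smul]
      exact (Set.smul_set_mono k1).trans ih
  have ip : ∀ m : ℕ, d ^ m • Y = Y := by
    intro m
    induction m with
    | zero => simp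
    | succ m ih => rw [pow_succ, mul_smul, i1, ih]
  have main : ∀ i j : ℕ, i < j → Disjoint ((d ^ i * e) • A) ((d ^ j * e) • A) := by
    intro i j hij
    obtain ⟨k, rfl⟩ := Nat.exists_eq_add_of_lt hij
    have h : d ^ (i + k + 1) * e = d ^ i * (d * (d ^ k * e)) := by
      rw [add_assoc, pow_add, pow_succ']; simp only [mul_assoc]
    rw [h]
    simp only [mul_smul, Set.disjoint_smul_set]
    refine hd.symm.mono_right (Set.smul_set_mono ?_)
    exact (Set.smul_set_mono k2).trans (kp k)
  intro n _
  refine ⟨fun i => d ^ (i : ℕ) * e, ?_, ha, ?_⟩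
  · intro i j hij
    rcases lt_or_gt_of_ne (fun h => hij (Fin.ext h) : (i : ℕ) ≠ j) with h | h
    · exact main _ _ h
    · exact (main _ _ h).symm
  · intro i
    simp only [mul_smul, i2, ip]
end

section
/- Let G be a group acting on a set X, and let A ⊆ Y ⊆ X with A nonempty. Suppose there exist elements a, a₀, a₁, a₂, a₃ ∈ G such that Y = A ∪ a • A, the sets a₀ • A, a₁ • A, a₂ • A, a₃ • A are pairwise disjoint, and Y is invariant under a, a₀, a₁, a₂, a₃. Then a₀ a a₁⁻¹ and a₂ a a₃⁻¹ freely generate a free subgroup of G of rank 2; that is, the group homomorphism from the free group on two generators to G sending the generators to a₀ a a₁⁻¹ and a₂ a a₃⁻¹ is injective. -/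
open Pointwise

theorem stmt_4 {G X : Type*} [Group G] [MulAction G X]
    (A Y : Set X) (hA : A.Nonempty) (hAY : A ⊆ Y)
    (a a0 a1 a2 a3 : G)
    (hY : Y = A ∪ a • A)
    (h01 : Disjoint (a0 • A) (a1 • A))
    (h02 : Disjoint (a0 • A) (a2 • A))
    (h03 : Disjoint (a0 • A) (a3 • A))
    (h12 : Disjoint (a1 • A) (a2 • A))
    (h13 : Disjoint (a1 • A) (a3 • A))
    (h23 : Disjoint (a2 • A) (a3 • A))
    (ha : a • Y = Y) (ha0 : a0 • Y = Y) (ha1 : a1 • Y = Y)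
    (ha2 : a2 • Y = Y) (ha3 : a3 • Y = Y) :
    Function.Injective
      (FreeGroup.lift (fun x : Bool =>
        if x then a2 * a * a3⁻¹ else a0 * a * a1⁻¹) : FreeGroup Bool →* G) := by
  classical
  let H : Subgroup G := MulAction.stabilizer G Y
  let S : SubMulAction H X :=
    { carrier := Y
      smul_mem' := by
        intro c x hx
        have h : (c : G) • Y = Y := c.2
        rw [← h]
        exact Set.smul_mem_smul_set hx }
  have key : ∀ x, x ∈ Y → x ∉ A → a • x ∈ A := by
    intro x hx hxA
    have h1 : a • x ∈ Y := ha ▸ Set.smul_mem_smul_set hx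
    rw [hY] at h1
    rcases h1 with h1 | h1
    · exact h1
    · exact absurd (Set.smul_mem_smul_set_iff.1 h1) hxA
  have key' : ∀ x, x ∈ Y → x ∉ A → a⁻¹ • x ∈ A := by
    intro x hx hxA
    rw [hY] at hx
    rcases hx with h1 | h1
    · exact absurd h1 hxA
    · exact Set.mem_smul_set_iff_inv_smul_mem.1 h1
  have inv : ∀ g : G, g • Y = Y → ∀ x ∈ Y, g⁻¹ • x ∈ Y := by
    intro g hg x hx
    rw [← hg] at hx
    exact Set.mem_smul_set_iff_inv_smul_mem.1 hx
  have fwd : ∀ b c : G, c • Y = Y → ∀ x ∈ Y, x ∉ c • A → (b * a * c⁻¹) • x ∈ b • A := by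
    intro b c hc x hx hxc
    rw [mul_smul, mul_smul]
    apply Set.smul_mem_smul_set
    apply key _ (inv c hc x hx)
    rwa [← Set.mem_smul_set_iff_inv_smul_mem]
  have bwd : ∀ b c : G, b • Y = Y → ∀ x ∈ Y, x ∉ b • A → (b * a * c⁻¹)⁻¹ • x ∈ c • A := by
    intro b c hc x hx hxc
    rw [mul_inv_rev, mul_inv_rev, inv_inv, mul_smul, mul_smul]
    apply Set.smul_mem_smul_set
    apply key' _ (inv b hc x hx)
    rwa [← Set.mem_smul_set_iff_inv_smul_mem]
  have m : ∀ g : G, g • Y = Y → g ∈ H := fun g hg => hg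
  let f : Bool → H := fun x =>
    if x then ⟨a2 * a * a3⁻¹, H.mul_mem (H.mul_mem (m _ ha2) (m _ ha)) (H.inv_mem (m _ ha3))⟩
    else ⟨a0 * a * a1⁻¹, H.mul_mem (H.mul_mem (m _ ha0) (m _ ha)) (H.inv_mem (m _ ha1))⟩
  have hcomp : (FreeGroup.lift (fun x : Bool =>
        if x then a2 * a * a3⁻¹ else a0 * a * a1⁻¹) : FreeGroup Bool →* G)
        = H.subtype.comp (FreeGroup.lift f) := by
    ext x
    cases x <;> simp [f]
  rw [hcomp, MonoidHom.coe_comp]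
  refine H.subtype_injective.comp ?_
  let P : G → Set S := fun g => {x | (x : X) ∈ g • A}
  have hP : ∀ g g' : G, Disjoint (g • A) (g' • A) → Disjoint (P g) (P g') := by
    intro g g' h
    rw [Set.disjoint_left] at h ⊢
    intro x hx hx'
    exact h hx hx'
  obtain ⟨p, hp⟩ := hA
  have hne : ∀ g : G, g • Y = Y → (P g).Nonempty := by
    intro g hg
    refine ⟨⟨g • p, ?_⟩, Set.smul_mem_smul_set hp⟩
    change g • p ∈ Y
    rw [← hg]
    exact Set.smul_mem_smul_set (hAY hp)
  have hU : FreeGroup.lift f = (FreeGroup.lift (fun x : ULift.{u_1} Bool => f x.down)).comp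
      (FreeGroup.freeGroupCongr (Equiv.ulift.{u_1}.symm : Bool ≃ ULift Bool)).toMonoidHom := by
    ext x
    simp
  rw [hU, MonoidHom.coe_comp]
  refine Function.Injective.comp ?_ (MulEquiv.injective _)
  refine FreeGroup.injective_lift_of_ping_pong (fun x : ULift.{u_1} Bool => f x.down)
    (fun x => if x.down then P a2 else P a0) (fun x => if x.down then P a3 else P a1) ?_ ?_ ?_ ?_ ?_ ?_
  · rintro ⟨_ | _⟩
    · exact hne _ ha0
    · exact hne _ ha2
  · rintro ⟨_ | _⟩ ⟨_ | _⟩ h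
    · exact absurd rfl h
    · exact hP _ _ h02
    · exact hP _ _ h02.symm
    · exact absurd rfl h
  · rintro ⟨_ | _⟩ ⟨_ | _⟩ h
    · exact absurd rfl h
    · exact hP _ _ h13
    · exact hP _ _ h13.symm
    · exact absurd rfl h
  · rintro ⟨_ | _⟩ ⟨_ | _⟩
    · exact hP _ _ h01
    · exact hP _ _ h03
    · exact hP _ _ h12.symm
    · exact hP _ _ h23
  · rintro ⟨_ | _⟩
    · rintro _ ⟨x, hx, rfl⟩
      exact fwd a0 a1 ha1 x x.2 hx
    · rintro _ ⟨x, hx, rfl⟩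
      exact fwd a2 a3 ha3 x x.2 hx
  · rintro ⟨_ | _⟩
    · rintro _ ⟨x, hx, rfl⟩
      exact bwd a0 a1 ha0 x x.2 hx
    · rintro _ ⟨x, hx, rfl⟩
      exact bwd a2 a3 ha2 x x.2 hx
end

section
/- Let G be a group acting on a set X, and let A ⊆ Y ⊆ X. Suppose there exist elements a, a₀, a₁, a₂, a₃, a₄ ∈ G such that Y = A ∪ a • A, the sets a₀ • A, a₁ • A, a₂ • A, a₃ • A, a₄ • A are pairwise disjoint, and Y is invariant under a and under each aᵢ (i = 0, …, 4). Set f₁ = a₁ a a₂⁻¹, f₂ = a₃ a a₄⁻¹, U₀ = a₀ • A, U₁⁺ = a₁ • A, U₁⁻ = a₂ • A, U₂⁺ = a₃ • A, U₂⁻ = a₄ • A. Then: f₁ • (U₀ ∪ U₁⁺ ∪ U₂⁺ ∪ U₂⁻) ⊆ U₁⁺, f₁⁻¹ • (U₀ ∪ U₁⁻ ∪ U₂⁺ ∪ U₂⁻) ⊆ U₁⁻, f₂ • (U₀ ∪ U₂⁺ ∪ U₁⁺ ∪ U₁⁻) ⊆ U₂⁺, and f₂⁻¹ • (U₀ ∪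 U₂⁻ ∪ U₁⁺ ∪ U₁⁻) ⊆ U₂⁻. -/
open Pointwise

theorem aux1 {G X : Type*} [Group G] [MulAction G X] (A Y : Set X) (a p q : G)
    (hY : Y = A ∪ a • A) (ha : a • Y = Y) (hq : q • Y = Y) (S : Set X) (hS : S ⊆ Y)
    (hd : Disjoint S (q • A)) : (p * a * q⁻¹) • S ⊆ p • A := by
  rintro _ ⟨x, hx, rfl⟩
  have hxq : q⁻¹ • x ∉ A := fun h =>
    Set.disjoint_left.1 hd hx (Set.mem_smul_set_iff_inv_smul_mem.2 h)
  have h1 : q⁻¹ • x ∈ Y := by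
    rw [← Set.mem_smul_set_iff_inv_smul_mem, hq]; exact hS hx
  have h2 : a • q⁻¹ • x ∈ Y := by
    rw [← ha]; exact Set.smul_mem_smul_set h1
  rw [hY] at h2
  rcases h2 with h2 | h2
  · simp only [mul_smul]
    exact Set.smul_mem_smul_set h2
  · exact absurd (Set.smul_mem_smul_set_iff.1 h2) hxq

theorem aux2 {G X : Type*} [Group G] [MulAction G X] (A Y : Set X) (a p q : G)
    (hY : Y = A ∪ a • A) (hp : p • Y = Y) (S : Set X) (hS : S ⊆ Y)
    (hd : Disjoint S (p • A)) : (p * a * q⁻¹)⁻¹ • S ⊆ q • A := by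
  rintro _ ⟨x, hx, rfl⟩
  have hxp : p⁻¹ • x ∉ A := fun h =>
    Set.disjoint_left.1 hd hx (Set.mem_smul_set_iff_inv_smul_mem.2 h)
  have h1 : p⁻¹ • x ∈ Y := by
    rw [← Set.mem_smul_set_iff_inv_smul_mem, hp]; exact hS hx
  rw [hY] at h1
  rcases h1 with h1 | h1
  · exact absurd h1 hxp
  · simp only [mul_inv_rev, inv_inv, mul_smul]
    exact Set.smul_mem_smul_set (Set.mem_smul_set_iff_inv_smul_mem.1 h1)

theorem stmt_5 {G X : Type*} [Group G] [MulAction G X]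
    (A Y : Set X) (hAY : A ⊆ Y)
    (a a0 a1 a2 a3 a4 : G)
    (hY : Y = A ∪ a • A)
    (h01 : Disjoint (a0 • A) (a1 • A))
    (h02 : Disjoint (a0 • A) (a2 • A))
    (h03 : Disjoint (a0 • A) (a3 • A))
    (h04 : Disjoint (a0 • A) (a4 • A))
    (h12 : Disjoint (a1 • A) (a2 • A))
    (h13 : Disjoint (a1 • A) (a3 • A))
    (h14 : Disjoint (a1 • A) (a4 • A))
    (h23 : Disjoint (a2 • A) (a3 • A))
    (h24 : Disjoint (a2 • A) (a4 • A))
    (h34 : Disjoint (a3 • A) (a4 • A))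
    (ha : a • Y = Y) (ha0 : a0 • Y = Y) (ha1 : a1 • Y = Y)
    (ha2 : a2 • Y = Y) (ha3 : a3 • Y = Y) (ha4 : a4 • Y = Y) :
    (a1 * a * a2⁻¹) • (a0 • A ∪ a1 • A ∪ a3 • A ∪ a4 • A) ⊆ a1 • A ∧
    (a1 * a * a2⁻¹)⁻¹ • (a0 • A ∪ a2 • A ∪ a3 • A ∪ a4 • A) ⊆ a2 • A ∧
    (a3 * a * a4⁻¹) • (a0 • A ∪ a3 • A ∪ a1 • A ∪ a2 • A) ⊆ a3 • A ∧
    (a3 * a * a4⁻¹)⁻¹ • (a0 • A ∪ a4 • A ∪ a1 • A ∪ a2 • A) ⊆ a4 • A := by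
  have key : ∀ g : G, g • Y = Y → g • A ⊆ Y := fun g hg => by
    rw [← hg]; exact Set.smul_set_mono hAY
  have k0 := key _ ha0
  have k1 := key _ ha1
  have k2 := key _ ha2
  have k3 := key _ ha3
  have k4 := key _ ha4
  refine ⟨aux1 A Y a a1 a2 hY ha ha2 _ ?_ ?_, aux2 A Y a a1 a2 hY ha1 _ ?_ ?_,
    aux1 A Y a a3 a4 hY ha ha4 _ ?_ ?_, aux2 A Y a a3 a4 hY ha3 _ ?_ ?_⟩ <;>
  simp only [Set.union_subset_iff, Set.disjoint_union_left] <;>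
  refine ⟨⟨⟨?_, ?_⟩, ?_⟩, ?_⟩ <;> first | assumption | (apply Disjoint.symm; assumption)
end

section
/- Let G be a group acting on a set X, let f₁, f₂ ∈ G, and let U₀, U₁⁺, U₁⁻, U₂⁺, U₂⁻ be nonempty pairwise disjoint subsets of X with: f₁ • (U₀ ∪ U₁⁺ ∪ U₂⁺ ∪ U₂⁻) ⊆ U₁⁺, f₁⁻¹ • (U₀ ∪ U₁⁻ ∪ U₂⁺ ∪ U₂⁻) ⊆ U₁⁻, f₂ • (U₀ ∪ U₂⁺ ∪ U₁⁺ ∪ U₁⁻) ⊆ U₂⁺, and f₂⁻¹ • (U₀ ∪ U₂⁻ ∪ U₁⁺ ∪ U₁⁻) ⊆ U₂⁻. Let F be the subgroup of G generated by f₁ and f₂. Then F acts freely on the F-invariant set F • U₀ = ⋃_{h ∈ F} h • U₀; that is, for every h ∈ F with h ≠ 1 and every point z ∈ F • U₀, one has h • z ≠ z. -/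
open Pointwise

theorem pp_aux {G X : Type*} [Group G] [MulAction G X] (f : Bool → G) (U0 : Set X)
    (V : Bool × Bool → Set X)
    (h0 : ∀ a : Bool × Bool, ∀ u ∈ U0, (cond a.2 (f a.1) (f a.1)⁻¹) • u ∈ V a)
    (h1 : ∀ a b : Bool × Bool, (a.1 = b.1 → a.2 = b.2) →
      ∀ u ∈ V b, (cond a.2 (f a.1) (f a.1)⁻¹) • u ∈ V a)
    (u : X) (hu : u ∈ U0) (L : List (Bool × Bool)) :
    ∀ a, FreeGroup.IsReduced (a :: L) → FreeGroup.lift f (FreeGroup.mk (a :: L)) • u ∈ V a := by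
  induction L with
  | nil =>
    intro a _
    simpa [FreeGroup.lift_mk] using h0 a u hu
  | cons b L ih =>
    intro a h
    rw [FreeGroup.isReduced_cons_cons] at h
    have h2 := h1 a b h.1 _ (ih b h.2)
    simpa [FreeGroup.lift_mk, mul_smul] using h2

theorem stmt_7 {G X : Type*} [Group G] [MulAction G X]
    (f1 f2 : G) (U0 U1p U1m U2p U2m : Set X)
    (hU0 : U0.Nonempty) (hU1p : U1p.Nonempty) (hU1m : U1m.Nonempty)
    (hU2p : U2p.Nonempty) (hU2m : U2m.Nonempty)
    (d01p : Disjoint U0 U1p) (d01m : Disjoint U0 U1m)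
    (d02p : Disjoint U0 U2p) (d02m : Disjoint U0 U2m)
    (d1p1m : Disjoint U1p U1m) (d1p2p : Disjoint U1p U2p) (d1p2m : Disjoint U1p U2m)
    (d1m2p : Disjoint U1m U2p) (d1m2m : Disjoint U1m U2m)
    (d2p2m : Disjoint U2p U2m)
    (hf1 : f1 • (U0 ∪ U1p ∪ U2p ∪ U2m) ⊆ U1p)
    (hf1' : f1⁻¹ • (U0 ∪ U1m ∪ U2p ∪ U2m) ⊆ U1m)
    (hf2 : f2 • (U0 ∪ U2p ∪ U1p ∪ U1m) ⊆ U2p)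
    (hf2' : f2⁻¹ • (U0 ∪ U2m ∪ U1p ∪ U1m) ⊆ U2m) :
    ∀ h ∈ Subgroup.closure {f1, f2}, h ≠ 1 →
      ∀ z ∈ ⋃ g ∈ (Subgroup.closure {f1, f2} : Subgroup G), g • U0, h • z ≠ z := by
  intro h hh hne z hz heq
  simp only [Set.mem_iUnion] at hz
  obtain ⟨g, hg, u, hu, rfl⟩ := hz
  have hk : g⁻¹ * h * g ∈ Subgroup.closure {f1, f2} :=
    mul_mem (mul_mem (inv_mem hg) hh) hg
  have hku : (g⁻¹ * h * g) • u = u := by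
    rw [mul_smul, mul_smul, inv_smul_eq_iff]; exact heq
  have hk1 : g⁻¹ * h * g ≠ 1 := by
    intro e
    apply hne
    have : h = g * (g⁻¹ * h * g) * g⁻¹ := by group
    rw [this, e]; group
  generalize g⁻¹ * h * g = k at hk hku hk1
  let f : Bool → G := fun b => cond b f1 f2
  have hr : (Set.range f) = {f1, f2} := by
    ext x; simp [f, eq_comm, or_comm]
  rw [← hr, ← FreeGroup.range_lift_eq_closure] at hk
  obtain ⟨w, rfl⟩ := hk
  let V : Bool × Bool → Set X := fun a =>
    cond a.1 (cond a.2 U1p U1m) (cond a.2 U2p U2m)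
  simp only [Set.smul_set_subset_iff, Set.mem_union] at hf1 hf1' hf2 hf2'
  have key := pp_aux f U0 V
    (by rintro ⟨_ | _, _ | _⟩ v hv <;> simp only [f, V, cond_true, cond_false] at * <;> grind)
    (by rintro ⟨_ | _, _ | _⟩ ⟨_ | _, _ | _⟩ hab v hv <;>
          simp only [f, V, cond_true, cond_false] at * <;> grind) u hu
  have hw : FreeGroup.IsReduced w.toWord := FreeGroup.isReduced_toWord
  have hmk : FreeGroup.mk w.toWord = w := FreeGroup.mk_toWord
  rcases hL : w.toWord with _ | ⟨a, L⟩
  · rw [FreeGroup.toWord_eq_nil_iff] at hL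
    exact hk1 (by rw [hL, map_one])
  · rw [hL] at hw hmk
    have h3 := key L a hw
    rw [hmk, hku] at h3
    rcases a with ⟨_ | _, _ | _⟩
    · exact Set.disjoint_left.1 d02m hu h3
    · exact Set.disjoint_left.1 d02p hu h3
    · exact Set.disjoint_left.1 d01m hu h3
    · exact Set.disjoint_left.1 d01p hu h3
end

section
/- Let G be a group acting on a set X, let k ≥ 2, let n ≥ 2k+1, and let A ⊆ Y ⊆ X with A nonempty. Suppose there exist elements a, a₀, a₁, …, a_{n-1} ∈ G such that Y = A ∪ a • A, the sets a₀ • A, …, a_{n-1} • A are pairwise disjoint, and Y is invariant under a and under each aᵢ. Then the elements a₁ a a₂⁻¹, a₃ a a₄⁻¹, …, a_{2k-1} a a_{2k}⁻¹ freely generate a free subgroup F of G of rank k (i.e., the group homomorphism from the free group on k generators to G sending the i-th generator to a_{2i-1} a a_{2i}⁻¹ is injective), and F acts freely on the set F • (a₀ • A) = ⋃_{h ∈ F} h • (a₀ • A). -/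
open Pointwise

theorem pp_aux_s8 {ι G X : Type*} [Group G] [MulAction G X] (c : ι → G)
    (P : ι × Bool → Set X) (D Y : Set X) (hPY : ∀ l, P l ⊆ Y) (hDY : D ⊆ Y)
    (hP : ∀ l m, l ≠ m → Disjoint (P l) (P m)) (hDP : ∀ l, Disjoint D (P l))
    (hc : ∀ i e, ∀ y ∈ Y, y ∉ P (i, !e) → (cond e (c i) (c i)⁻¹) • y ∈ P (i, e))
    (z : X) (hz : z ∈ D) (L : List (ι × Bool)) :
    ∀ l, FreeGroup.IsReduced (l :: L) →
      (FreeGroup.lift c (FreeGroup.mk (l :: L))) • z ∈ P l := by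
  induction L with
  | nil =>
    rintro ⟨i, e⟩ _
    have := hc i e z (hDY hz) (Set.disjoint_left.1 (hDP _) hz)
    simpa [FreeGroup.lift_mk] using this
  | cons m L ih =>
    rintro ⟨i, e⟩ h
    rw [FreeGroup.isReduced_cons_cons] at h
    have h1 := ih m h.2
    have h2 : m ≠ (i, !e) := by
      rintro rfl
      have := h.1 rfl
      simp at this
    have := hc i e _ (hPY _ h1) (Set.disjoint_left.1 (hP _ _ h2) h1)
    simpa [FreeGroup.lift_mk, mul_smul] using this

theorem pp_aux2 {ι G X : Type*} [Group G] [MulAction G X] (c : ι → G)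
    (P : ι × Bool → Set X) (D Y : Set X) (hPY : ∀ l, P l ⊆ Y) (hDY : D ⊆ Y)
    (hP : ∀ l m, l ≠ m → Disjoint (P l) (P m)) (hDP : ∀ l, Disjoint D (P l))
    (hc : ∀ i e, ∀ y ∈ Y, y ∉ P (i, !e) → (cond e (c i) (c i)⁻¹) • y ∈ P (i, e))
    (hD : D.Nonempty) :
    Function.Injective (FreeGroup.lift c) ∧
    ∀ h ∈ Subgroup.closure (Set.range c), h ≠ 1 →
      ∀ z ∈ ⋃ g ∈ Subgroup.closure (Set.range c), g • D, h • z ≠ z := by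
  classical
  have key : ∀ u : FreeGroup ι, u ≠ 1 → ∀ z ∈ D, FreeGroup.lift c u • z ≠ z := by
    intro u hu z hz hfix
    have hr := FreeGroup.isReduced_toWord (x := u)
    have hm := FreeGroup.mk_toWord (x := u)
    rcases hw : u.toWord with _ | ⟨l, L⟩
    · exact hu (FreeGroup.toWord_eq_nil_iff.1 hw)
    · rw [hw] at hr hm
      have := pp_aux_s8 c P D Y hPY hDY hP hDP hc z hz L l hr
      rw [hm, hfix] at this
      exact Set.disjoint_left.1 (hDP l) hz this
  refine ⟨?_, ?_⟩
  · rw [injective_iff_map_eq_one]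
    intro u hu
    by_contra hne
    obtain ⟨z, hz⟩ := hD
    exact key u hne z hz (by rw [hu, one_smul])
  · rw [← FreeGroup.range_lift_eq_closure]
    rintro _ ⟨u, rfl⟩ hu z hz hfix
    simp only [Set.mem_iUnion] at hz
    obtain ⟨_, ⟨v, rfl⟩, y, hy, rfl⟩ := hz
    refine key (v⁻¹ * u * v) ?_ y hy ?_
    · intro h
      apply hu
      have : u = 1 := by
        have h' : u = v * (v⁻¹ * u * v) * v⁻¹ := by group
        rw [h', h]; simp
      simp [this]
    · simp only at hfix
      rw [map_mul, map_mul, map_inv, mul_smul, mul_smul, hfix, inv_smul_smul]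

theorem stmt_8 {G X : Type*} [Group G] [MulAction G X]
    (A Y : Set X) (hA : A.Nonempty) (hAY : A ⊆ Y)
    (k n : ℕ) (hk : 2 ≤ k) (hn : 2 * k + 1 ≤ n)
    (a : G) (b : Fin n → G)
    (hY : Y = A ∪ a • A)
    (hdisj : ∀ i j : Fin n, i ≠ j → Disjoint (b i • A) (b j • A))
    (ha : a • Y = Y) (hb : ∀ i : Fin n, b i • Y = Y) :
    Function.Injective
      (FreeGroup.lift (fun i : Fin k =>
        b ⟨2 * i + 1, by have := i.isLt; omega⟩ * a *
          (b ⟨2 * i + 2, by have := i.isLt; omega⟩)⁻¹) : FreeGroup (Fin k) →* G) ∧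
    ∀ h ∈ Subgroup.closure (Set.range fun i : Fin k =>
        b ⟨2 * i + 1, by have := i.isLt; omega⟩ * a *
          (b ⟨2 * i + 2, by have := i.isLt; omega⟩)⁻¹), h ≠ 1 →
      ∀ z ∈ ⋃ g ∈ (Subgroup.closure (Set.range fun i : Fin k =>
        b ⟨2 * i + 1, by have := i.isLt; omega⟩ * a *
          (b ⟨2 * i + 2, by have := i.isLt; omega⟩)⁻¹) : Subgroup G),
        g • (b ⟨0, by omega⟩ • A), h • z ≠ z := by
  have hbY : ∀ i, b i • A ⊆ Y := fun i => by
    rw [← hb i]; exact Set.smul_set_mono hAY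
  have hbi : ∀ i, ∀ y ∈ Y, (b i)⁻¹ • y ∈ Y := fun i y hy => by
    rw [← hb i] at hy; exact Set.mem_smul_set_iff_inv_smul_mem.1 hy
  have hYs : ∀ y ∈ Y, y ∉ A → a⁻¹ • y ∈ A := by
    intro y hy hyA
    rw [hY] at hy
    exact Set.mem_smul_set_iff_inv_smul_mem.1 (hy.resolve_left hyA)
  have hYs' : ∀ y ∈ Y, y ∉ A → a • y ∈ A := by
    intro y hy hyA
    have h1 : a • y ∈ Y := by rw [← ha]; exact Set.smul_mem_smul_set hy
    rw [hY] at h1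
    refine h1.resolve_right fun h => hyA ?_
    simpa using h
  refine pp_aux2 _ (fun l : Fin k × Bool =>
    cond l.2 (b ⟨2 * l.1 + 1, by have := l.1.isLt; omega⟩ • A)
      (b ⟨2 * l.1 + 2, by have := l.1.isLt; omega⟩ • A)) (b ⟨0, by omega⟩ • A) Y
    ?_ (hbY _) ?_ ?_ ?_ hA.smul_set
  · rintro ⟨i, _ | _⟩ <;> exact hbY _
  · rintro ⟨i, _ | _⟩ ⟨j, _ | _⟩ h <;> refine hdisj _ _ ?_ <;>
      simp [Fin.ext_iff] at h ⊢ <;> omega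
  · rintro ⟨i, _ | _⟩ <;> refine hdisj _ _ ?_ <;> simp [Fin.ext_iff]
  · rintro i (_ | _) y hy hn
    · simp only [Bool.not_false, cond_true, cond_false, mul_inv_rev, inv_inv, mul_smul,
        Set.mem_smul_set_iff_inv_smul_mem, inv_smul_smul] at hn ⊢
      exact hYs _ (hbi _ y hy) hn
    · simp only [Bool.not_true, cond_true, cond_false, mul_smul,
        Set.mem_smul_set_iff_inv_smul_mem, inv_smul_smul] at hn ⊢
      exact hYs' _ (hbi _ y hy) hn
end

section
/- Let F be the free group on two generators a and b (F = FreeGroup Bool with a = FreeGroup.of false and b = FreeGroup.of true). Let A' ⊆ F be the set of nontrivial elements whose reduced word begins with the letter a or a⁻¹, i.e., A' = {g : F | ∃ (s : Bool) (t : List (Bool × Bool)), FreeGroup.toWord g = (false, s) :: t}. Then: (1) F = A' ∪ a • A', where a • A' = {a * g | g ∈ A'}; and (2) the three sets A', b • A' = {b * g | g ∈ A'}, and b² • A' = {b² * g | g ∈ A'} are pairwise disjoint. -/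
open Pointwise

theorem stmt_9 (A' : Set (FreeGroup Bool))
    (hA' : A' = {g : FreeGroup Bool |
      ∃ (s : Bool) (t : List (Bool × Bool)), FreeGroup.toWord g = (false, s) :: t}) :
    (Set.univ : Set (FreeGroup Bool)) = A' ∪ (FreeGroup.of false) • A' ∧
    Disjoint A' ((FreeGroup.of true) • A') ∧
    Disjoint A' ((FreeGroup.of true ^ 2) • A') ∧
    Disjoint ((FreeGroup.of true) • A') ((FreeGroup.of true ^ 2) • A') := by
  have hb : ∀ g ∈ A', (FreeGroup.of true * g).toWord = (true, true) :: g.toWord := by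
    intro g hg
    rw [hA'] at hg
    obtain ⟨s, t, h⟩ := hg
    rw [FreeGroup.toWord_mul, FreeGroup.toWord_of]
    apply FreeGroup.IsReduced.reduce_eq
    have h2 := FreeGroup.isReduced_toWord (x := g)
    rw [h] at h2 ⊢
    simpa using h2
  have hb2 : ∀ g ∈ A', (FreeGroup.of true ^ 2 * g).toWord
      = (true, true) :: (true, true) :: g.toWord := by
    intro g hg
    rw [hA'] at hg
    obtain ⟨s, t, h⟩ := hg
    rw [FreeGroup.toWord_mul, FreeGroup.toWord_of_pow]
    apply FreeGroup.IsReduced.reduce_eq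
    have h2 := FreeGroup.isReduced_toWord (x := g)
    rw [h] at h2 ⊢
    simpa [List.replicate] using h2
  have d1 : Disjoint A' ((FreeGroup.of true) • A') := by
    rw [Set.disjoint_left]
    rintro x hx ⟨g, hg, rfl⟩
    have := hb g hg
    rw [hA'] at hx
    obtain ⟨s, t, h⟩ := hx
    simp only [smul_eq_mul] at h
    rw [this] at h
    simp at h
  refine ⟨?_, d1, ?_, ?_⟩
  · symm
    rw [Set.eq_univ_iff_forall]
    intro g
    by_cases hg : g ∈ A'
    · exact Or.inl hg
    · right
      rw [Set.mem_smul_set_iff_inv_smul_mem, smul_eq_mul]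
      rw [hA'] at hg ⊢
      refine ⟨false, g.toWord, ?_⟩
      rw [FreeGroup.toWord_mul, FreeGroup.toWord_inv, FreeGroup.toWord_of]
      apply FreeGroup.IsReduced.reduce_eq
      have h2 := FreeGroup.isReduced_toWord (x := g)
      rcases h : g.toWord with _ | ⟨⟨x, s⟩, t⟩
      · simp [FreeGroup.invRev]
      · rw [h] at h2
        cases x
        · exact absurd ⟨s, t, h⟩ hg
        · simpa [FreeGroup.invRev] using h2
  · rw [Set.disjoint_left]
    rintro x hx ⟨g, hg, rfl⟩
    have := hb2 g hg
    rw [hA'] at hx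
    obtain ⟨s, t, h⟩ := hx
    simp only [smul_eq_mul] at h
    rw [this] at h
    simp at h
  · rw [pow_two, mul_smul]
    exact Set.disjoint_smul_set.2 d1
end

section
/- Let F be a group acting freely on a nonempty set Z (for every h ∈ F with h ≠ 1 and every z ∈ Z, h • z ≠ z), and suppose a, b ∈ F are a free basis of F, i.e., the group homomorphism from the free group on two generators to F sending the generators to a and b is an isomorphism. Then there exists a subset A ⊆ Z such that Z = A ∪ a • A and the three sets A, b • A, b² • A are pairwise disjoint. -/
open Pointwise

def SS (c : Bool × Bool → Prop) (w : FreeGroup Bool) : Prop :=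
  ∃ x L, w.toWord = x :: L ∧ c x

lemma toWord_of_mul_aux (x : Bool × Bool) (w : FreeGroup Bool) :
    (FreeGroup.mk [x] * w).toWord = FreeGroup.reduce (x :: w.toWord) := by
  conv_lhs => rw [← FreeGroup.mk_toWord (x := w)]
  rw [FreeGroup.mul_mk, FreeGroup.toWord_mk]; rfl

lemma step_aux (x : Bool × Bool) (w : FreeGroup Bool)
    (h : ¬ SS (fun y => y = (x.1, !x.2)) w) : SS (fun y => y = x) (FreeGroup.mk [x] * w) := by
  have h1 := toWord_of_mul_aux x w
  rw [FreeGroup.reduce.cons, FreeGroup.reduce_toWord] at h1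
  rcases hw : w.toWord with _ | ⟨y, L⟩
  · rw [hw] at h1
    exact ⟨x, [], h1, rfl⟩
  · rw [hw] at h1
    have hy : y ≠ (x.1, !x.2) := fun e => h ⟨y, L, hw, e⟩
    have : ¬ (x.1 = y.1 ∧ x.2 = !y.2) := by
      rintro ⟨e1, e2⟩
      apply hy
      ext <;> simp [e1, e2]
    simp only [this, if_false] at h1
    exact ⟨x, _, h1, rfl⟩

lemma SS_excl {c d : Bool × Bool → Prop} {w : FreeGroup Bool} (h : SS c w) (h' : SS d w) :
    ∃ x, c x ∧ d x := by
  obtain ⟨x, L, e, hx⟩ := h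
  obtain ⟨y, M, e', hy⟩ := h'
  rw [e] at e'
  cases e'
  exact ⟨x, hx, hy⟩

theorem stmt_10 {F Z : Type*} [Group F] [MulAction F Z] [Nonempty Z]
    (hfree : ∀ h : F, h ≠ 1 → ∀ z : Z, h • z ≠ z)
    (a b : F)
    (hbasis : Function.Bijective
      (FreeGroup.lift (fun x : Bool => if x then b else a) : FreeGroup Bool →* F)) :
    ∃ A : Set Z,
      (Set.univ : Set Z) = A ∪ a • A ∧
      Disjoint A (b • A) ∧
      Disjoint A ((b ^ 2) • A) ∧
      Disjoint (b • A) ((b ^ 2) • A) := by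
  set φ := (FreeGroup.lift (fun x : Bool => if x then b else a) : FreeGroup Bool →* F) with hφ
  have hb : φ (FreeGroup.mk [(true, true)]) = b := by simp [hφ]
  have ha : φ (FreeGroup.mk [(false, false)]) = a⁻¹ := by simp [hφ]
  let rep : Z → Z := fun z => (Quotient.mk (MulAction.orbitRel F Z) z).out
  have hrep : ∀ z, ∃ w, φ w • rep z = z := by
    intro z
    have : (MulAction.orbitRel F Z) (rep z) z := Quotient.mk_out (s := MulAction.orbitRel F Z) z
    obtain ⟨g, hg⟩ := (MulAction.orbitRel F Z).symm this
    obtain ⟨w, rfl⟩ := hbasis.2 g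
    exact ⟨w, hg⟩
  have hrep2 : ∀ (g : F) z, rep (g • z) = rep z := by
    intro g z
    have : Quotient.mk (MulAction.orbitRel F Z) (g • z) = Quotient.mk _ z :=
      Quotient.sound ⟨g, rfl⟩
    simp only [rep, this]
  choose wd hwd using hrep
  have key : ∀ g z, wd (φ g • z) = g * wd z := by
    intro g z
    apply hbasis.1
    have h1 := hwd (φ g • z)
    rw [hrep2] at h1
    have h2 : φ (g * wd z) • rep z = φ g • z := by rw [map_mul, mul_smul, hwd]
    by_contra hne
    apply hfree ((φ (g * wd z))⁻¹ * φ (wd (φ g • z))) _ (rep z)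
    · rw [mul_smul, h1, ← h2, inv_smul_smul]
    · intro e
      exact hne (inv_mul_eq_one.1 e).symm
  have kb : ∀ z, wd (b • z) = FreeGroup.mk [(true, true)] * wd z := by
    intro z; rw [← key, hb]
  have ka : ∀ z, wd (a⁻¹ • z) = FreeGroup.mk [(false, false)] * wd z := by
    intro z; rw [← key, ha]
  let A : Set Z := {z | SS (fun y => y.1 = false) (wd z)}
  have t1 : ∀ z ∈ A, SS (fun y => y = (true, true)) (wd (b • z)) := by
    intro z hz
    rw [kb]
    refine step_aux _ _ fun h => ?_
    obtain ⟨x, h1, h2⟩ := SS_excl hz h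
    simp [h2] at h1
  have t2 : ∀ z ∈ A, SS (fun y => y = (true, true)) (wd (b • b • z)) := by
    intro z hz
    rw [kb]
    refine step_aux _ _ fun h => ?_
    obtain ⟨x, h1, h2⟩ := SS_excl (t1 z hz) h
    simp [h2] at h1
  have t0 : ∀ z ∈ A, ¬ SS (fun y => y = (true, true)) (wd z) := by
    intro z hz h
    obtain ⟨x, h1, h2⟩ := SS_excl hz h
    simp [h2] at h1
  refine ⟨A, ?_, ?_, ?_, ?_⟩
  · symm
    rw [Set.eq_univ_iff_forall]
    intro z
    by_cases hz : z ∈ A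
    · exact Or.inl hz
    · right
      rw [Set.mem_smul_set_iff_inv_smul_mem]
      change SS _ (wd (a⁻¹ • z))
      rw [ka]
      obtain ⟨x, L, e, hx⟩ := step_aux (false, false) (wd z) (by
        rintro ⟨x, L, e, hx⟩
        exact hz ⟨x, L, e, by simp [hx]⟩)
      exact ⟨x, L, e, by simp [hx]⟩
  · rw [Set.disjoint_left]
    rintro _ hz ⟨y, hy, rfl⟩
    exact t0 _ hz (t1 y hy)
  · rw [Set.disjoint_left]
    rintro _ hz ⟨y, hy, rfl⟩
    apply t0 _ hz
    have := t2 y hy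
    rwa [← mul_smul, ← pow_two] at this
  · rw [Set.disjoint_left]
    rintro _ ⟨x, hx, rfl⟩ ⟨y, hy, e⟩
    have e' : x = b • y := by
      have : b • b • y = b • x := by rw [← mul_smul, ← pow_two]; exact e
      exact (smul_left_cancel b this).symm
    subst e'
    exact t0 _ hx (t1 y hy)
end

section
/- A group G contains a free subgroup of rank 2 (i.e., there exists an injective group homomorphism from the free group on two generators into G) if and only if there exist a subset A ⊆ G and elements a, b, c ∈ G such that G = A ∪ aA (where aA = {a * g | g ∈ A}) and the three sets A, bA, cA are pairwise disjoint. -/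
open Pointwise

theorem pp_bool {G : Type*} [Group G] (a : Bool → G) (X Y : Bool → Set G)
    (hXnonempty : ∀ i, (X i).Nonempty)
    (hXdisj : Pairwise (Function.onFun Disjoint X))
    (hYdisj : Pairwise (Function.onFun Disjoint Y))
    (hXYdisj : ∀ i j, Disjoint (X i) (Y j))
    (hX : ∀ i, a i • (Y i)ᶜ ⊆ X i)
    (hY : ∀ i, a⁻¹ i • (X i)ᶜ ⊆ Y i) :
    ∃ φ : FreeGroup Bool →* G, Function.Injective φ := by
  have h := FreeGroup.injective_lift_of_ping_pong (ι := ULift Bool)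
    (fun i => a i.down) (fun i => X i.down) (fun i => Y i.down)
    (fun i => hXnonempty _)
    (fun i j hij => hXdisj (fun h => hij (ULift.ext _ _ h)))
    (fun i j hij => hYdisj (fun h => hij (ULift.ext _ _ h)))
    (fun i j => hXYdisj _ _) (fun i => hX _) (fun i => hY _)
  exact ⟨(FreeGroup.lift (fun i : ULift Bool => a i.down)).comp
    (FreeGroup.freeGroupCongr Equiv.ulift.symm).toMonoidHom,
    h.comp (MulEquiv.injective _)⟩

theorem pp_aux_s11 {G : Type*} [Group G] (A B C : Set G) (s t u : G) (hne : A.Nonempty)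
    (hAB : ∀ g, g ∈ A → g ∉ B) (hAC : ∀ g, g ∈ A → g ∉ C) (hBC : ∀ g, g ∈ B → g ∉ C)
    (hs : ∀ g, g ∉ A → s * g ∈ A) (hs' : ∀ g, g ∉ A → s⁻¹ * g ∈ A)
    (ht : ∀ g, g ∉ B → t * g ∈ B) (ht' : ∀ g, g ∉ B → t⁻¹ * g ∈ B)
    (hu : ∀ g, g ∉ C → u * g ∈ C) :
    ∃ φ : FreeGroup Bool →* G, Function.Injective φ := by
  have key : ∀ g, (u⁻¹ * g ∈ A ∨ u⁻¹ * g ∈ B) → g ∈ C := by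
    intro g hg
    have : u⁻¹ * g ∉ C := by
      rcases hg with h | h
      · exact hAC _ h
      · exact hBC _ h
    simpa using hu _ this
  have hst : ∀ g, g ∉ B → s * t * g ∈ A := by
    intro g hg
    rw [mul_assoc]
    exact hs _ (fun h => hAB _ h (ht _ hg))
  have hst' : ∀ g, g ∉ A → (s * t)⁻¹ * g ∈ B := by
    intro g hg
    rw [mul_inv_rev, mul_assoc]
    exact ht' _ (hAB _ (hs' _ hg))
  refine pp_bool
    (a := fun i : Bool => if i then s * t else u * (s * t) * u⁻¹)
    (X := fun i : Bool => if i then A else {g | u⁻¹ * g ∈ A})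
    (Y := fun i : Bool => if i then B else {g | u⁻¹ * g ∈ B}) ?_ ?_ ?_ ?_ ?_ ?_
  · rintro (_ | _)
    · obtain ⟨x, hx⟩ := hne
      exact ⟨u * x, by simpa using hx⟩
    · simpa using hne
  · rintro (_ | _) (_ | _) h <;> simp [Function.onFun, Set.disjoint_left] at h ⊢
    · intro g hg hg'; exact hAC _ hg' (key _ (.inl hg))
    · intro g hg hg'; exact hAC _ hg (key _ (.inl hg'))
  · rintro (_ | _) (_ | _) h <;> simp [Function.onFun, Set.disjoint_left] at h ⊢
    · intro g hg hg'; exact hBC _ hg' (key _ (.inr hg))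
    · intro g hg hg'; exact hBC _ hg (key _ (.inr hg'))
  · rintro (_ | _) (_ | _) <;> simp [Set.disjoint_left]
    · intro g hg hg'; exact hAB _ hg hg'
    · intro g hg hg'; exact hBC _ hg' (key _ (.inl hg))
    · intro g hg hg'; exact hAC _ hg (key _ (.inr hg'))
    · exact hAB
  · rintro (_ | _) _ ⟨g, hg, rfl⟩
    · simpa [mul_assoc] using hst _ hg
    · simpa using hst _ hg
  · rintro (_ | _) _ ⟨g, hg, rfl⟩
    · simpa [mul_assoc] using hst' _ hg
    · simpa using hst' _ hg

theorem toWord_aux (i b : Bool) (f : FreeGroup Bool)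
    (h : ∀ b', f.toWord.head? ≠ some (i, b')) :
    (FreeGroup.mk [(i, b)] * f).toWord = (i, b) :: f.toWord := by
  have hr := FreeGroup.reduce_toWord f
  rw [FreeGroup.toWord_mul, FreeGroup.toWord_mk, FreeGroup.reduce_singleton,
    List.singleton_append, FreeGroup.reduce.cons, hr]
  rcases hL : f.toWord with _ | ⟨⟨j, b'⟩, L⟩
  · rfl
  · have : i ≠ j := by
      rintro rfl
      exact h b' (by simp [hL])
    simp [this]

theorem free_aux : ∃ (S : Set (FreeGroup Bool)) (x y : FreeGroup Bool),
    (∀ f, f ∈ S ∨ x⁻¹ * f ∈ S) ∧ (∀ f ∈ S, y⁻¹ * f ∉ S) ∧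
    (∀ f ∈ S, (y * y)⁻¹ * f ∉ S) := by
  refine ⟨{f | ∃ b, f.toWord.head? = some (true, b)}, FreeGroup.of true, FreeGroup.of false,
    ?_, ?_, ?_⟩
  · intro f
    by_cases h : ∃ b, f.toWord.head? = some (true, b)
    · exact .inl h
    · right
      push Not at h
      refine ⟨false, ?_⟩
      have := toWord_aux true false f h
      change (FreeGroup.mk [(true, false)] * f).toWord.head? = _
      rw [this]; rfl
  · rintro f ⟨b, hb⟩ ⟨b', hb'⟩
    have := toWord_aux false false f (by simp [hb])
    change (FreeGroup.mk [(false, false)] * f).toWord.head? = _ at hb'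
    simp [this] at hb'
  · rintro f ⟨b, hb⟩ ⟨b', hb'⟩
    have h1 := toWord_aux false false f (by simp [hb])
    rw [mul_inv_rev, mul_assoc] at hb'
    change (FreeGroup.mk [(false, false)] *
      (FreeGroup.mk [(false, false)] * f)).toWord.head? = _ at hb'
    rw [FreeGroup.toWord_mul, h1] at hb'
    have hr := FreeGroup.reduce_toWord (FreeGroup.mk [(false, false)] * f)
    rw [h1] at hr
    rw [FreeGroup.toWord_mk, FreeGroup.reduce_singleton, List.singleton_append,
      FreeGroup.reduce.cons, hr] at hb'
    simp at hb'

theorem stmt_11 {G : Type*} [Group G] :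
    (∃ φ : FreeGroup Bool →* G, Function.Injective φ) ↔
    ∃ (A : Set G) (a b c : G),
      (Set.univ : Set G) = A ∪ a • A ∧
      Disjoint A (b • A) ∧ Disjoint A (c • A) ∧ Disjoint (b • A) (c • A) := by
  constructor
  · rintro ⟨φ, hφ⟩
    obtain ⟨S, x, y, h1, h2, h3⟩ := free_aux
    let r : G → G := fun g => (Quotient.mk (QuotientGroup.rightRel φ.range) g).out
    have hr : ∀ g, ∃ f, φ f * r g = g := by
      intro g
      have : QuotientGroup.rightRel φ.range (r g) g := Quotient.mk_out (s := _) g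
      rw [QuotientGroup.rightRel_apply] at this
      obtain ⟨f, hf⟩ := this
      exact ⟨f, by rw [hf]; group⟩
    have hr2 : ∀ f g, r (φ f * g) = r g := by
      intro f g
      have : Quotient.mk (QuotientGroup.rightRel φ.range) (φ f * g) = Quotient.mk _ g := by
        apply Quotient.sound
        change QuotientGroup.rightRel φ.range _ _
        rw [QuotientGroup.rightRel_apply]
        exact ⟨f⁻¹, by simp⟩
      simp only [r, this]
    choose p hp using hr
    have hp2 : ∀ f g, p (φ f * g) = f * p g := by
      intro f g
      apply hφ
      have := hp (φ f * g)
      rw [hr2] at this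
      apply mul_right_cancel (b := r g)
      rw [this, map_mul, mul_assoc, hp]
    have hm : ∀ f g, g ∈ φ f • {g | p g ∈ S} ↔ f⁻¹ * p g ∈ S := by
      intro f g
      rw [Set.mem_smul_set_iff_inv_smul_mem, ← map_inv, smul_eq_mul, Set.mem_ofPred_eq, hp2]
    refine ⟨{g | p g ∈ S}, φ x, φ y, φ (y * y), ?_, ?_, ?_, ?_⟩
    · ext g
      simp only [Set.mem_univ, Set.mem_union, hm, true_iff]
      exact h1 _
    · rw [Set.disjoint_left]
      intro g hg hg'
      exact h2 _ hg ((hm _ _).1 hg')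
    · rw [Set.disjoint_left]
      intro g hg hg'
      exact h3 _ hg ((hm _ _).1 hg')
    · rw [Set.disjoint_left]
      intro g hg hg'
      refine h2 _ ((hm _ _).1 hg) ?_
      simpa [mul_assoc] using (hm _ _).1 hg'
  · rintro ⟨A, a, b, c, hU, hAB, hAC, hBC⟩
    have hU' : ∀ g, g ∈ A ∨ a⁻¹ * g ∈ A := by
      intro g
      have : g ∈ A ∪ a • A := hU ▸ Set.mem_univ g
      simpa [Set.mem_smul_set_iff_inv_smul_mem] using this
    have hne : A.Nonempty := by
      rcases hU' 1 with h | h <;> exact ⟨_, h⟩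
    have ha' : ∀ g, g ∉ A → a⁻¹ * g ∈ A := fun g hg => (hU' g).resolve_left hg
    have ha : ∀ g, g ∉ A → a * g ∈ A := fun g hg =>
      (hU' (a * g)).resolve_right (by simpa using hg)
    rw [Set.disjoint_left] at hAB hAC hBC
    refine pp_aux_s11 A (b • A) (c • A) a (b * a * b⁻¹) (c * a * c⁻¹) hne
      (fun g => @hAB g) (fun g => @hAC g) (fun g => @hBC g) ha ha' ?_ ?_ ?_ <;>
    · intro g hg
      rw [Set.mem_smul_set_iff_inv_smul_mem, smul_eq_mul] at hg ⊢
      first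
      | simpa [mul_assoc] using ha _ hg
      | simpa [mul_assoc] using ha' _ hg
end

section
/- Let A ⊆ ℝ² be the set A = {(x, y) | x > 0 ∧ y ≥ 0} ∪ {(x, y) | x < 0 ∧ y ≤ 0}, and let α, β, γ, δ be real numbers with α, β, γ, δ > 0, αβ ≥ 1, and γδ ≥ 1. Consider the matrices in SL(2, ℝ): a = [[0, -1], [1, 0]], a₀ = [[1, α], [0, 1]], a₁ = [[1, 0], [β, 1]], a₂ = [[0, -1], [1, γ]], a₃ = [[-δ, -1], [1, 0]], acting linearly on ℝ². Then ℝ² \ {(0,0)} = A ∪ a • A, and the four sets a₀ • A, a₁ • A, a₂ • A, a₃ • A are pairwise disjoint. -/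
open Pointwise

theorem stmt_12 (α β γ δ : ℝ)
    (hα : 0 < α) (hβ : 0 < β) (hγ : 0 < γ) (hδ : 0 < δ)
    (hαβ : 1 ≤ α * β) (hγδ : 1 ≤ γ * δ)
    (A : Set (Fin 2 → ℝ))
    (hA : A = {v | 0 < v 0 ∧ 0 ≤ v 1} ∪ {v | v 0 < 0 ∧ v 1 ≤ 0})
    (a a0 a1 a2 a3 : Matrix.SpecialLinearGroup (Fin 2) ℝ)
    (ha : a = ⟨!![0, -1; 1, 0], by simp [Matrix.det_fin_two_of]⟩)
    (ha0 : a0 = ⟨!![1, α; 0, 1], by simp [Matrix.det_fin_two_of]⟩)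
    (ha1 : a1 = ⟨!![1, 0; β, 1], by simp [Matrix.det_fin_two_of]⟩)
    (ha2 : a2 = ⟨!![0, -1; 1, γ], by simp [Matrix.det_fin_two_of]⟩)
    (ha3 : a3 = ⟨!![-δ, -1; 1, 0], by simp [Matrix.det_fin_two_of]⟩) :
    {v : Fin 2 → ℝ | v ≠ 0} =
      A ∪ ((fun v => (a : Matrix (Fin 2) (Fin 2) ℝ).mulVec v) '' A) ∧
    Disjoint ((fun v => (a0 : Matrix (Fin 2) (Fin 2) ℝ).mulVec v) '' A)
      ((fun v => (a1 : Matrix (Fin 2) (Fin 2) ℝ).mulVec v) '' A) ∧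
    Disjoint ((fun v => (a0 : Matrix (Fin 2) (Fin 2) ℝ).mulVec v) '' A)
      ((fun v => (a2 : Matrix (Fin 2) (Fin 2) ℝ).mulVec v) '' A) ∧
    Disjoint ((fun v => (a0 : Matrix (Fin 2) (Fin 2) ℝ).mulVec v) '' A)
      ((fun v => (a3 : Matrix (Fin 2) (Fin 2) ℝ).mulVec v) '' A) ∧
    Disjoint ((fun v => (a1 : Matrix (Fin 2) (Fin 2) ℝ).mulVec v) '' A)
      ((fun v => (a2 : Matrix (Fin 2) (Fin 2) ℝ).mulVec v) '' A) ∧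
    Disjoint ((fun v => (a1 : Matrix (Fin 2) (Fin 2) ℝ).mulVec v) '' A)
      ((fun v => (a3 : Matrix (Fin 2) (Fin 2) ℝ).mulVec v) '' A) ∧
    Disjoint ((fun v => (a2 : Matrix (Fin 2) (Fin 2) ℝ).mulVec v) '' A)
      ((fun v => (a3 : Matrix (Fin 2) (Fin 2) ℝ).mulVec v) '' A) := by
  subst hA ha ha0 ha1 ha2 ha3
  refine ⟨?_, ?_, ?_, ?_, ?_, ?_, ?_⟩
  · ext v
    simp only [Set.mem_ofPred_eq, Set.mem_union, Set.mem_image]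
    constructor
    · intro hv
      by_cases h : (0 < v 0 ∧ 0 ≤ v 1) ∨ (v 0 < 0 ∧ v 1 ≤ 0)
      · exact Or.inl h
      · right
        refine ⟨![v 1, - v 0], ?_, ?_⟩
        · have hne : ¬ (v 0 = 0 ∧ v 1 = 0) := by
            rintro ⟨h0, h1⟩
            apply hv
            ext i
            fin_cases i
            · exact h0
            · exact h1
          simp only [Matrix.cons_val_zero, Matrix.cons_val_one]
          grind
        · ext i
          fin_cases i <;> simp [Matrix.mulVec, dotProduct, Fin.sum_univ_two]
    · rintro (h | ⟨w, h, rfl⟩) h0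
      · subst h0
        simp at h
      · have e1 := congrFun h0 1
        simp [Matrix.mulVec, dotProduct, Fin.sum_univ_two] at e1
        rcases h with h | h <;> linarith [h.1]
  all_goals
    rw [Set.disjoint_left]
    rintro _ ⟨v, hv, rfl⟩ ⟨w, hw, h⟩
    have e0 := congrFun h 0
    have e1 := congrFun h 1
    simp [Matrix.mulVec, dotProduct, Fin.sum_univ_two] at e0 e1 hv hw
    clear h
    generalize v 0 = x at *
    generalize v 1 = y at *
    generalize w 0 = p at *
    generalize w 1 = q at *
    clear v w
    have sg : ∀ c t : ℝ, 0 < c → (0 ≤ t → 0 ≤ c * t) ∧ (t ≤ 0 → c * t ≤ 0) :=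
      fun c t hc => ⟨fun ht => mul_nonneg hc.le ht,
        fun ht => mul_nonpos_of_nonneg_of_nonpos hc.le ht⟩
    have s1 := sg α y hα
    have s2 := sg β p hβ
    have s3 := sg β x hβ
    have s4 := sg γ q hγ
    have s5 := sg δ p hδ
    have s6 := sg α q hα
    have s7 := sg γ y hγ
    clear sg
  · have k : α * y = (α * β - 1) * p + p + α * q := by rw [← e1]; ring
    have k1 : 0 ≤ p → 0 ≤ (α * β - 1) * p := fun h => mul_nonneg (by linarith) h
    have k2 : p ≤ 0 → (α * β - 1) * p ≤ 0 :=
      fun h => mul_nonpos_of_nonneg_of_nonpos (by linarith) h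
    generalize (α * β - 1) * p = r at *
    generalize α * y = r1 at *
    generalize α * q = r2 at *
    grind
  · grind
  · grind
  · grind
  · grind
  · have k : γ * y = (γ * δ - 1) * p + p + γ * q := by
      rw [show y = δ * p + q by linarith]; ring
    have k1 : 0 ≤ p → 0 ≤ (γ * δ - 1) * p := fun h => mul_nonneg (by linarith) h
    have k2 : p ≤ 0 → (γ * δ - 1) * p ≤ 0 :=
      fun h => mul_nonpos_of_nonneg_of_nonpos (by linarith) h
    generalize (γ * δ - 1) * p = r at *
    generalize γ * y = r1 at *
    generalize γ * q = r2 at *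
    grind
end

section
/- Let α, β, γ, δ be real numbers with α, β, γ, δ > 0, αβ ≥ 1, and γδ ≥ 1. Then the matrices [[1, -α], [-γ, 1 + αγ]] and [[1 + βδ, -δ], [-β, 1]] in SL(2, ℝ) freely generate a free subgroup of rank 2; that is, the group homomorphism from the free group on two generators to SL(2, ℝ) sending the generators to these two matrices is injective. -/
open scoped Pointwise in
theorem pp_aux_s13 (A B : Matrix.SpecialLinearGroup (Fin 2) ℝ) (α β γ δ : ℝ)
    (hα : 0 < α) (hβ : 0 < β) (hγ : 0 < γ) (hδ : 0 < δ)
    (hαβ : 1 ≤ α * β) (hγδ : 1 ≤ γ * δ)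
    (hA : A.1 = !![1, -α; -γ, 1 + α * γ]) (hB : B.1 = !![1 + β * δ, -δ; -β, 1]) :
    Function.Injective (FreeGroup.lift (fun x : Bool => if x then B else A)) := by
  let XA : Set (Matrix.SpecialLinearGroup (Fin 2) ℝ) :=
    {g | g.1 0 0 * g.1 1 0 < 0 ∧ 0 ≤ (γ * g.1 0 0 + g.1 1 0) * g.1 1 0}
  let YA : Set (Matrix.SpecialLinearGroup (Fin 2) ℝ) :=
    {g | g.1 1 0 ≠ 0 ∧ 0 ≤ (g.1 0 0 - α * g.1 1 0) * g.1 1 0}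
  let XB : Set (Matrix.SpecialLinearGroup (Fin 2) ℝ) :=
    {g | g.1 1 0 = 0 ∨ (g.1 0 0 + δ * g.1 1 0) * g.1 1 0 < 0}
  let YB : Set (Matrix.SpecialLinearGroup (Fin 2) ℝ) :=
    {g | 0 ≤ g.1 0 0 * g.1 1 0 ∧ 0 < (g.1 1 0 - β * g.1 0 0) * g.1 1 0}
  have nz : ∀ g : Matrix.SpecialLinearGroup (Fin 2) ℝ, g.1 0 0 ≠ 0 ∨ g.1 1 0 ≠ 0 := by
    intro g
    by_contra! h
    have := g.2
    rw [Matrix.det_fin_two, h.1, h.2] at this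
    simp at this
  -- disjointness
  have d1 : Disjoint XA XB := by
    rw [Set.disjoint_left]
    rintro g ⟨h1, h2⟩ h3
    rcases h3 with h3 | h3
    · simp [h3] at h1
    · generalize g.1 0 0 = x at *
      generalize g.1 1 0 = y at *
      have hy : 0 ≤ (γ * δ - 1) * y ^ 2 := by
        have := sub_nonneg.2 hγδ
        positivity
      nlinarith [mul_pos hγ (neg_pos.2 h3)]
  have d2 : Disjoint YA YB := by
    rw [Set.disjoint_left]
    rintro g ⟨h1, h2⟩ ⟨h3, h4⟩
    generalize g.1 0 0 = x at *
    generalize g.1 1 0 = y at *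
    have hy : 0 ≤ (α * β - 1) * y ^ 2 := by
      have := sub_nonneg.2 hαβ
      positivity
    nlinarith [mul_nonneg hβ.le h2]
  have d3 : Disjoint XA YA := by
    rw [Set.disjoint_left]
    rintro g ⟨h1, h2⟩ ⟨h3, h4⟩
    generalize g.1 0 0 = x at *
    generalize g.1 1 0 = y at *
    have hy : 0 ≤ α * y ^ 2 := by positivity
    nlinarith
  have d4 : Disjoint XA YB := by
    rw [Set.disjoint_left]
    rintro g ⟨h1, h2⟩ ⟨h3, h4⟩
    exact absurd h1 (not_lt.2 h3)
  have d5 : Disjoint XB YA := by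
    rw [Set.disjoint_left]
    rintro g h1 ⟨h3, h4⟩
    rcases h1 with h1 | h1
    · exact h3 h1
    generalize g.1 0 0 = x at *
    generalize g.1 1 0 = y at *
    have hy : 0 ≤ α * y ^ 2 := by positivity
    have hy' : 0 ≤ δ * y ^ 2 := by positivity
    nlinarith
  have d6 : Disjoint XB YB := by
    rw [Set.disjoint_left]
    rintro g h1 ⟨h3, h4⟩
    rcases h1 with h1 | h1
    · simp [h1] at h4
    generalize g.1 0 0 = x at *
    generalize g.1 1 0 = y at *
    have hy' : 0 ≤ δ * y ^ 2 := by positivity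
    nlinarith
  have pA : ∀ g : Matrix.SpecialLinearGroup (Fin 2) ℝ, g ∉ YA → A * g ∈ XA := by
    intro g hg
    have h0 := nz g
    have e0 : (A * g).1 0 0 = g.1 0 0 - α * g.1 1 0 := by
      simp [hA, Matrix.mul_apply, Fin.sum_univ_two]; ring
    have e1 : (A * g).1 1 0 = g.1 1 0 - γ * (g.1 0 0 - α * g.1 1 0) := by
      simp [hA, Matrix.mul_apply, Fin.sum_univ_two]; ring
    simp only [YA, XA, Set.mem_setOf_eq, e0, e1, not_and_or, not_not, not_le] at hg ⊢
    generalize g.1 0 0 = x at *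
    generalize g.1 1 0 = y at *
    by_cases hy : y = 0
    · subst hy
      have hx : x ≠ 0 := by simpa using h0
      have : 0 < γ * x ^ 2 := by positivity
      constructor <;> nlinarith
    · have h := hg.resolve_left hy
      have : 0 ≤ γ * (x - α * y) ^ 2 := by positivity
      have : 0 < y ^ 2 := by positivity
      constructor <;> nlinarith [mul_pos hγ (neg_pos.2 h)]
  have pB : ∀ g : Matrix.SpecialLinearGroup (Fin 2) ℝ, g ∉ YB → B * g ∈ XB := by
    intro g hg
    have h0 := nz g
    have e0 : (B * g).1 0 0 = g.1 0 0 - δ * (g.1 1 0 - β * g.1 0 0) := by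
      simp [hB, Matrix.mul_apply, Fin.sum_univ_two]; ring
    have e1 : (B * g).1 1 0 = g.1 1 0 - β * g.1 0 0 := by
      simp [hB, Matrix.mul_apply, Fin.sum_univ_two]; ring
    simp only [YB, XB, Set.mem_setOf_eq, e0, e1, not_and_or, not_lt, not_le] at hg ⊢
    generalize g.1 0 0 = x at *
    generalize g.1 1 0 = y at *
    by_cases hz : y - β * x = 0
    · exact Or.inl hz
    right
    have hz2 : 0 < (y - β * x) ^ 2 := by positivity
    rcases hg with h | h
    · have : 0 ≤ β * x ^ 2 := by positivity
      nlinarith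
    · have : β * (x * (y - β * x)) < 0 := by nlinarith
      have := (pos_iff_neg_of_mul_neg this).1 hβ
      nlinarith
  have qA : ∀ g : Matrix.SpecialLinearGroup (Fin 2) ℝ, A * g ∉ XA → g ∈ YA := fun g h => by
    by_contra h'; exact h (pA g h')
  have qB : ∀ g : Matrix.SpecialLinearGroup (Fin 2) ℝ, B * g ∉ XB → g ∈ YB := fun g h => by
    by_contra h'; exact h (pB g h')
  apply FreeGroup.injective_lift_of_ping_pong (fun x : Bool => if x then B else A)
    (fun x => if x then XB else XA) (fun x => if x then YB else YA)
  · rintro (_ | _)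
    · refine ⟨A * 1, pA 1 ?_⟩
      simp [YA]
    · refine ⟨1, ?_⟩
      simp [XB]
  · rintro (_ | _) (_ | _) h
    · exact absurd rfl h
    · exact d1
    · exact d1.symm
    · exact absurd rfl h
  · rintro (_ | _) (_ | _) h
    · exact absurd rfl h
    · exact d2
    · exact d2.symm
    · exact absurd rfl h
  · rintro (_ | _) (_ | _)
    · exact d3
    · exact d4
    · exact d5
    · exact d6
  · rintro (_ | _) _ ⟨g, hg, rfl⟩
    · exact pA g hg
    · exact pB g hg
  · rintro (_ | _) _ ⟨g, hg, rfl⟩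
    · refine qA (A⁻¹ * g) ?_
      rw [mul_inv_cancel_left]; exact hg
    · refine qB (B⁻¹ * g) ?_
      rw [mul_inv_cancel_left]; exact hg

theorem stmt_13 (α β γ δ : ℝ)
    (hα : 0 < α) (hβ : 0 < β) (hγ : 0 < γ) (hδ : 0 < δ)
    (hαβ : 1 ≤ α * β) (hγδ : 1 ≤ γ * δ) :
    Function.Injective
      (FreeGroup.lift (fun x : Bool =>
        if x then
          (⟨!![1 + β * δ, -δ; -β, 1], by simp [Matrix.det_fin_two_of]; ring⟩ :
            Matrix.SpecialLinearGroup (Fin 2) ℝ)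
        else
          (⟨!![1, -α; -γ, 1 + α * γ], by simp [Matrix.det_fin_two_of]⟩ :
            Matrix.SpecialLinearGroup (Fin 2) ℝ)) :
        FreeGroup Bool →* Matrix.SpecialLinearGroup (Fin 2) ℝ) := by
  exact pp_aux_s13 _ _ α β γ δ hα hβ hγ hδ hαβ hγδ rfl rfl
end

section
/- Let s and t be real numbers with s ≥ 2 and t ≥ 2. Then the matrices [[0, -1], [1, -s]] and [[0, -1], [1, t]] in SL(2, ℝ) freely generate a free subgroup of rank 2; that is, the group homomorphism from the free group on two generators to SL(2, ℝ) sending the generators to these two matrices is injective. -/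
open scoped Pointwise in
theorem key_aux (s t : ℝ) (hs : 2 ≤ s) (ht : 2 ≤ t)
    (A B : Matrix.SpecialLinearGroup (Fin 2) ℝ)
    (hA : A.1 = !![0, -1; 1, -s]) (hB : B.1 = !![0, -1; 1, t]) :
    Function.Injective (FreeGroup.lift (fun x : Bool => if x then B else A) :
      FreeGroup Bool →* Matrix.SpecialLinearGroup (Fin 2) ℝ) := by
  classical
  let : MulAction (Matrix.SpecialLinearGroup (Fin 2) ℝ) (OnePoint ℝ) :=
    MulAction.compHom (OnePoint ℝ) (Matrix.SpecialLinearGroup.toGL (n := Fin 2) (R := ℝ))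
  have sm : ∀ (g : Matrix.SpecialLinearGroup (Fin 2) ℝ) (p : OnePoint ℝ),
      g • p = Matrix.SpecialLinearGroup.toGL g • p := fun _ _ => rfl
  have h_inf : ∀ (g : Matrix.SpecialLinearGroup (Fin 2) ℝ),
      g • (OnePoint.infty : OnePoint ℝ) =
        if g.1 1 0 = 0 then OnePoint.infty else ((g.1 0 0 / g.1 1 0 : ℝ) : OnePoint ℝ) := by
    intro g
    rw [sm, OnePoint.smul_infty_eq_ite]
    rfl
  have h_some : ∀ (g : Matrix.SpecialLinearGroup (Fin 2) ℝ) (k : ℝ),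
      g • (k : OnePoint ℝ) = if g.1 1 0 * k + g.1 1 1 = 0 then OnePoint.infty else
        (((g.1 0 0 * k + g.1 0 1) / (g.1 1 0 * k + g.1 1 1) : ℝ) : OnePoint ℝ) := by
    intro g k
    rw [sm, OnePoint.smul_some_eq_ite]
    rfl
  have iA : (A⁻¹).1 = !![-s, 1; -1, 0] := by
    have h : (A⁻¹).1 = A.1.adjugate := Matrix.SpecialLinearGroup.coe_inv A
    rw [h, hA, Matrix.adjugate_fin_two]
    simp
  have iB : (B⁻¹).1 = !![t, 1; -1, 0] := by
    have h : (B⁻¹).1 = B.1.adjugate := Matrix.SpecialLinearGroup.coe_inv B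
    rw [h, hB, Matrix.adjugate_fin_two]
    simp
  let X : Bool → Set (OnePoint ℝ) := fun b =>
    if b then {p | p.elim False (fun z => -1 ≤ z ∧ z < 0)}
    else {p | p.elim False (fun z => 0 ≤ z ∧ z < 1)}
  let Y : Bool → Set (OnePoint ℝ) := fun b =>
    if b then {p | p.elim True (fun z => z < -1)}
    else {p | p.elim False (fun z => 1 ≤ z)}
  apply FreeGroup.injective_lift_of_ping_pong _ X Y
  · rintro (_ | _)
    · exact ⟨((0 : ℝ) : OnePoint ℝ), by simp [X]⟩
    · exact ⟨((-1 : ℝ) : OnePoint ℝ), by simp [X]⟩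
  · rintro (_ | _) (_ | _) hij <;> first | exact absurd rfl hij | skip
    all_goals
      refine Set.disjoint_left.mpr fun p => ?_
      induction p using OnePoint.rec <;> simp [X] <;> intros <;> linarith
  · rintro (_ | _) (_ | _) hij <;> first | exact absurd rfl hij | skip
    all_goals
      refine Set.disjoint_left.mpr fun p => ?_
      induction p using OnePoint.rec <;> simp [Y] <;> intros <;> linarith
  · rintro (_ | _) (_ | _)
    all_goals
      refine Set.disjoint_left.mpr fun p => ?_
      induction p using OnePoint.rec <;> simp [X, Y] <;> intros <;> linarith
  · rintro (_ | _) _ ⟨p, hp, rfl⟩ <;> induction p using OnePoint.rec with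
    | infty => simp [X, Y, h_inf, hA, hB] at hp ⊢
    | coe z =>
      simp [X, Y, h_some, hA, hB] at hp ⊢
      first
      | have h1 : z + -s < 0 := by linarith
        rw [if_neg h1.ne]
        simp only [OnePoint.elim_some]
        exact ⟨div_nonneg_of_nonpos (by norm_num) h1.le, by
          rw [div_lt_iff_of_neg h1]; linarith⟩
      | have h1 : 0 < z + t := by linarith
        rw [if_neg h1.ne']
        simp only [OnePoint.elim_some]
        exact ⟨by rw [le_div_iff₀ h1]; linarith, div_neg_of_neg_of_pos (by norm_num) h1⟩
  · rintro (_ | _) _ ⟨p, hp, rfl⟩ <;> induction p using OnePoint.rec with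
    | infty =>
      simp [X, Y, h_inf, iA, iB, -Matrix.SpecialLinearGroup.coe_inv] at hp ⊢
      try linarith
    | coe z =>
      simp [X, Y, h_some, iA, iB, -Matrix.SpecialLinearGroup.coe_inv] at hp ⊢
      by_cases hz : z = 0
      · subst hz
        first
        | (exfalso; linarith [hp le_rfl])
        | simp
        | (norm_num at hp; done)
      rw [if_neg hz]
      simp only [OnePoint.elim_some]
      rw [div_neg, ← neg_div]
      rcases lt_or_gt_of_ne hz with h | h
      · first
        | rw [le_div_iff_of_neg h]; nlinarith
        | rw [div_lt_iff_of_neg h]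
          have : z < -1 := by
            by_contra hc
            linarith [hp (by linarith)]
          nlinarith
      · first
        | rw [le_div_iff₀ h]
          have := hp h.le
          nlinarith
        | rw [div_lt_iff₀ h]; nlinarith

theorem stmt_14 (s t : ℝ) (hs : 2 ≤ s) (ht : 2 ≤ t) :
    Function.Injective
      (FreeGroup.lift (fun x : Bool =>
        if x then
          (⟨!![0, -1; 1, t], by simp [Matrix.det_fin_two_of]⟩ :
            Matrix.SpecialLinearGroup (Fin 2) ℝ)
        else
          (⟨!![0, -1; 1, -s], by simp [Matrix.det_fin_two_of]⟩ :
            Matrix.SpecialLinearGroup (Fin 2) ℝ)) :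
        FreeGroup Bool →* Matrix.SpecialLinearGroup (Fin 2) ℝ) := by
  exact key_aux s t hs ht _ _ rfl rfl
end

section
/- Let u and v be real numbers with u > 0, v > 0, and uv ≥ 4. Then the matrices [[1, u], [0, 1]] and [[1, 0], [v, 1]] in SL(2, ℝ) freely generate a free subgroup of rank 2; that is, the group homomorphism from the free group on two generators to SL(2, ℝ) sending the generators to these two matrices is injective. -/
namespace PP

abbrev SL := Matrix.SpecialLinearGroup (Fin 2) ℝ

def A (g : SL) : ℝ := g.1 0 0 ^ 2 + g.1 0 1 ^ 2
def B (g : SL) : ℝ := g.1 0 0 * g.1 1 0 + g.1 0 1 * g.1 1 1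
def C (g : SL) : ℝ := g.1 1 0 ^ 2 + g.1 1 1 ^ 2

lemma rel (g : SL) : A g * C g = B g ^ 2 + 1 := by
  have h := g.2
  rw [Matrix.det_fin_two] at h
  have h2 : (g.1 0 0 * g.1 1 1 - g.1 0 1 * g.1 1 0) ^ 2 = 1 := by rw [h]; norm_num
  simp only [A, B, C]
  linear_combination h2

lemma A_pos (g : SL) : 0 < A g := by
  have h := rel g
  have h1 : 0 ≤ A g := by unfold A; positivity
  rcases h1.eq_or_lt with h2 | h2
  · rw [← h2] at h; nlinarith [sq_nonneg (B g)]
  · exact h2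

lemma C_pos (g : SL) : 0 < C g := by
  have h := rel g
  have h1 : 0 ≤ C g := by unfold C; positivity
  rcases h1.eq_or_lt with h2 | h2
  · rw [← h2] at h; nlinarith [sq_nonneg (B g)]
  · exact h2

def X (u v : ℝ) (i : Bool) : Set SL :=
  if i then {g | v * A g ≤ 2 * B g} else {g | u * C g ≤ 2 * B g}
def Y (u v : ℝ) (i : Bool) : Set SL :=
  if i then {g | v * A g < -2 * B g} else {g | u * C g < -2 * B g}

lemma key (u v a b c : ℝ) (hu : 0 < u) (hv : 0 < v) (huv : 4 ≤ u * v)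
    (hc : 0 < c) (ha : 0 < a) (h : a * c = b ^ 2 + 1)
    (h1 : v * a ≤ 2 * b) (h2 : u * c ≤ 2 * b) : False := by
  have h3 : (v * a) * (u * c) ≤ (2 * b) * (2 * b) :=
    mul_le_mul h1 h2 (by positivity) (by nlinarith [mul_pos hv ha])
  have h4 : (v * a) * (u * c) = (u * v) * (b ^ 2 + 1) := by rw [← h]; ring
  nlinarith [sq_nonneg b]

lemma up (M g : SL) (t : ℝ) (h : M.1 = !![1, t; 0, 1]) :
    B (M * g) = B g + t * C g ∧ C (M * g) = C g := by
  have e : (M * g).1 = !![1, t; 0, 1] * g.1 := by rw [← h]; rfl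
  simp only [B, C, e]
  simp [Matrix.mul_apply, Fin.sum_univ_two]
  ring

lemma low (M g : SL) (t : ℝ) (h : M.1 = !![1, 0; t, 1]) :
    B (M * g) = B g + t * A g ∧ A (M * g) = A g := by
  have e : (M * g).1 = !![1, 0; t, 1] * g.1 := by rw [← h]; rfl
  simp only [B, A, e]
  simp [Matrix.mul_apply, Fin.sum_univ_two]
  ring

lemma up_inv (M : SL) (t : ℝ) (h : M.1 = !![1, t; 0, 1]) : (M⁻¹).1 = !![1, -t; 0, 1] := by
  rw [Matrix.SpecialLinearGroup.coe_inv, h, Matrix.adjugate_fin_two]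
  simp

lemma low_inv (M : SL) (t : ℝ) (h : M.1 = !![1, 0; t, 1]) : (M⁻¹).1 = !![1, 0; -t, 1] := by
  rw [Matrix.SpecialLinearGroup.coe_inv, h, Matrix.adjugate_fin_two]
  simp

end PP

theorem stmt_15 (u v : ℝ) (hu : 0 < u) (hv : 0 < v) (huv : 4 ≤ u * v) :
    Function.Injective
      (FreeGroup.lift (fun x : Bool =>
        if x then
          (⟨!![1, 0; v, 1], by simp [Matrix.det_fin_two_of]⟩ :
            Matrix.SpecialLinearGroup (Fin 2) ℝ)
        else
          (⟨!![1, u; 0, 1], by simp [Matrix.det_fin_two_of]⟩ :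
            Matrix.SpecialLinearGroup (Fin 2) ℝ)) :
        FreeGroup Bool →* Matrix.SpecialLinearGroup (Fin 2) ℝ) := by
  classical
  refine FreeGroup.injective_lift_of_ping_pong _ (PP.X u v) (PP.Y u v) ?_ ?_ ?_ ?_ ?_ ?_
  · intro i
    cases i
    · refine ⟨⟨!![1, u; 0, 1], by simp [Matrix.det_fin_two_of]⟩, ?_⟩
      change u * ((0:ℝ) ^ 2 + 1 ^ 2) ≤ 2 * ((1:ℝ) * 0 + u * 1)
      linarith
    · refine ⟨⟨!![1, 0; v, 1], by simp [Matrix.det_fin_two_of]⟩, ?_⟩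
      change v * ((1:ℝ) ^ 2 + 0 ^ 2) ≤ 2 * ((1:ℝ) * v + 0 * 1)
      linarith
  · intro i j hij
    refine Set.disjoint_left.2 fun g h1 h2 => ?_
    have k := PP.key u v _ (PP.B g) _ hu hv huv (PP.C_pos g) (PP.A_pos g) (PP.rel g)
    cases i <;> cases j <;> simp [PP.X] at hij h1 h2 <;> exact k (by linarith) (by linarith)
  · intro i j hij
    refine Set.disjoint_left.2 fun g h1 h2 => ?_
    have k := PP.key u v _ (-PP.B g) _ hu hv huv (PP.C_pos g) (PP.A_pos g)
      (by rw [PP.rel g]; ring)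
    cases i <;> cases j <;> simp [PP.Y] at hij h1 h2 <;> exact k (by linarith) (by linarith)
  · intro i j
    refine Set.disjoint_left.2 fun g h1 h2 => ?_
    have := mul_pos hu (PP.C_pos g)
    have := mul_pos hv (PP.A_pos g)
    cases i <;> cases j <;> simp [PP.X, PP.Y] at h1 h2 <;> linarith
  · rintro i _ ⟨g, hg, rfl⟩
    cases i
    · obtain ⟨h1, h2⟩ := PP.up ⟨!![1, u; 0, 1], by simp [Matrix.det_fin_two_of]⟩ g u rfl
      have hg' : ¬ (u * PP.C g < -2 * PP.B g) := hg
      have fin := (by linarith : u * PP.C g ≤ 2 * (PP.B g + u * PP.C g))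
      exact (congrArg₂ (fun x y : ℝ => x ≤ y) (congrArg (u * ·) h2) (congrArg ((2 : ℝ) * ·) h1)).mpr fin
    · obtain ⟨h1, h2⟩ := PP.low ⟨!![1, 0; v, 1], by simp [Matrix.det_fin_two_of]⟩ g v rfl
      have hg' : ¬ (v * PP.A g < -2 * PP.B g) := hg
      have fin := (by linarith : v * PP.A g ≤ 2 * (PP.B g + v * PP.A g))
      exact (congrArg₂ (fun x y : ℝ => x ≤ y) (congrArg (v * ·) h2) (congrArg ((2 : ℝ) * ·) h1)).mpr fin
  · rintro i _ ⟨g, hg, rfl⟩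
    cases i
    · obtain ⟨h1, h2⟩ := PP.up (⟨!![1, u; 0, 1], by simp [Matrix.det_fin_two_of]⟩⁻¹) g (-u)
        (PP.up_inv _ u rfl)
      have hg' : ¬ (u * PP.C g ≤ 2 * PP.B g) := hg
      have fin := (by linarith : u * PP.C g < -2 * (PP.B g + -u * PP.C g))
      exact (congrArg₂ (fun x y : ℝ => x < y) (congrArg (u * ·) h2) (congrArg ((-2 : ℝ) * ·) h1)).mpr fin
    · obtain ⟨h1, h2⟩ := PP.low (⟨!![1, 0; v, 1], by simp [Matrix.det_fin_two_of]⟩⁻¹) g (-v)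
        (PP.low_inv _ v rfl)
      have hg' : ¬ (v * PP.A g ≤ 2 * PP.B g) := hg
      have fin := (by linarith : v * PP.A g < -2 * (PP.B g + -v * PP.A g))
      exact (congrArg₂ (fun x y : ℝ => x < y) (congrArg (v * ·) h2) (congrArg ((-2 : ℝ) * ·) h1)).mpr fin
end

section
/- Let G be a group acting by homeomorphisms on a topological space X (each g ∈ G acts as a continuous map with continuous inverse). Suppose there exist elements a, b ∈ G freely generating a free subgroup F of rank 2 (the homomorphism from the free group on two generators sending the generators to a, b is injective, with image F) and a nonempty open F-invariant subset Z ⊆ X on which F acts properly discontinuously: for every z ∈ Z there is an open neighborhood U ⊆ Z of z such that (h • U) ∩ U = ∅ for all h ∈ F with h ≠ 1. Then there exist nonempty open subsets A ⊆ Y ⊆ X and elements a', a₀, a₁, a₂ ∈ G such that Y = A ∪ a' • A, the sets a₀ • A, a₁ • A, a₂ • A are pairwise disjoint, and Y is invariant under a', a₀, a₁, a₂ (i.e., a' • Y = Y and aᵢ • Y = Y). -/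
open Pointwise

theorem aux_cons (x : Bool × Bool) (w : FreeGroup Bool)
    (h : ∀ y ∈ w.toWord.head?, y.1 ≠ x.1 ∨ y.2 = x.2) :
    (FreeGroup.mk [x] * w).toWord = x :: w.toWord := by
  have h1 : (FreeGroup.mk [x] * w) = FreeGroup.mk (x :: w.toWord) := by
    conv_lhs => rw [← FreeGroup.mk_toWord (x := w)]
    rw [FreeGroup.mul_mk]; rfl
  rw [h1, FreeGroup.toWord_mk, FreeGroup.reduce.cons, FreeGroup.reduce_toWord]
  rcases hw : w.toWord with _ | ⟨y, t⟩
  · rfl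
  · rw [hw] at h
    have := h y (by simp)
    simp only
    rw [if_neg]
    rintro ⟨h2, h3⟩
    rcases this with h4 | h4
    · exact h4 h2.symm
    · rw [h4] at h3
      simp at h3

def auxS : Set (FreeGroup Bool) := {w | ∀ y ∈ w.toWord.head?, y.1 = false}

theorem auxS_b (w : FreeGroup Bool) (h : w ∈ auxS) :
    FreeGroup.of true * w ∉ auxS ∧ FreeGroup.of true * (FreeGroup.of true * w) ∉ auxS := by
  have h1 : (FreeGroup.of true * w).toWord = (true, true) :: w.toWord :=
    aux_cons (true, true) w (fun y hy => by left; rw [h y hy]; simp)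
  have h2 : (FreeGroup.of true * (FreeGroup.of true * w)).toWord
      = (true, true) :: (FreeGroup.of true * w).toWord :=
    aux_cons (true, true) _ (fun y hy => by
      right; rw [h1] at hy; simp at hy; rw [← hy])
  constructor
  · intro h3
    have := h3 (true, true) (by rw [h1]; simp)
    simp at this
  · intro h3
    have := h3 (true, true) (by rw [h2]; simp)
    simp at this

theorem auxS_a (w : FreeGroup Bool) (h : w ∉ auxS) :
    (FreeGroup.of false)⁻¹ * w ∈ auxS := by
  have h1 : ((FreeGroup.of false)⁻¹ * w).toWord = (false, false) :: w.toWord :=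
    aux_cons (false, false) w (fun y hy => by
      left
      intro hy1
      apply h
      intro z hz
      have : y = z := Option.mem_unique hy hz
      rw [← this]; exact hy1)
  intro y hy
  rw [h1] at hy; simp at hy; rw [← hy]

theorem stmt_17 {G X : Type*} [Group G] [TopologicalSpace X] [MulAction G X]
    (hcont : ∀ g : G, Continuous fun x : X => g • x)
    (a b : G)
    (hinj : Function.Injective
      (FreeGroup.lift (fun x : Bool => if x then b else a) : FreeGroup Bool →* G))
    (Z : Set X) (hZne : Z.Nonempty) (hZopen : IsOpen Z)
    (hZinv : ∀ h ∈ Subgroup.closure ({a, b} : Set G), h • Z = Z)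
    (hpd : ∀ z ∈ Z, ∃ U, U ⊆ Z ∧ IsOpen U ∧ z ∈ U ∧
      ∀ h ∈ Subgroup.closure ({a, b} : Set G), h ≠ 1 → (h • U) ∩ U = ∅) :
    ∃ (A Y : Set X) (a' a0 a1 a2 : G),
      A.Nonempty ∧ IsOpen A ∧ IsOpen Y ∧ A ⊆ Y ∧
      Y = A ∪ a' • A ∧
      Disjoint (a0 • A) (a1 • A) ∧
      Disjoint (a0 • A) (a2 • A) ∧
      Disjoint (a1 • A) (a2 • A) ∧
      a' • Y = Y ∧ a0 • Y = Y ∧ a1 • Y = Y ∧ a2 • Y = Y := by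
  obtain ⟨z, hz⟩ := hZne
  obtain ⟨U, -, hUo, hzU, hU⟩ := hpd z hz
  set φ := (FreeGroup.lift (fun x : Bool => if x then b else a) : FreeGroup Bool →* G) with hφ
  have hmem : ∀ w, φ w ∈ Subgroup.closure ({a, b} : Set G) := by
    intro w
    have : φ.range ≤ Subgroup.closure ({a, b} : Set G) := by
      rw [hφ, FreeGroup.range_lift_eq_closure]
      apply Subgroup.closure_mono
      rintro _ ⟨x, rfl⟩
      cases x <;> simp
    exact this ⟨w, rfl⟩
  have key : ∀ w w' : FreeGroup Bool, ∀ u ∈ U, ∀ u' ∈ U, φ w • u = φ w' • u' → w = w' := by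
    intro w w' u hu u' hu' h
    by_contra hne
    have h1 : φ (w'⁻¹ * w) ≠ 1 := by
      intro h1
      rw [← map_one φ] at h1
      have := hinj h1
      exact hne (inv_mul_eq_one.mp this).symm
    have h2 := hU _ (hmem (w'⁻¹ * w)) h1
    have h3 : u' ∈ (φ (w'⁻¹ * w) • U) ∩ U := by
      refine ⟨⟨u, hu, ?_⟩, hu'⟩
      simp only [map_mul, map_inv, mul_smul, h, inv_smul_smul]
    rw [h2] at h3
    exact h3
  have hop : ∀ g : G, IsOpen (g • U) := by
    intro g
    have : g • U = (fun x : X => g⁻¹ • x) ⁻¹' U := by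
      ext x; exact Set.mem_smul_set_iff_inv_smul_mem
    rw [this]
    exact hUo.preimage (hcont _)
  let T : Set (FreeGroup Bool) → Set X := fun S => {x | ∃ w ∈ S, ∃ u ∈ U, φ w • u = x}
  have hTo : ∀ S, IsOpen (T S) := by
    intro S
    have : T S = ⋃ w ∈ S, φ w • U := by
      ext x; simp [T, Set.mem_smul_set]
    rw [this]
    exact isOpen_biUnion fun w _ => hop _
  have hTs : ∀ v S, φ v • T S = T {w | v⁻¹ * w ∈ S} := by
    intro v S
    ext x
    constructor
    · rintro ⟨_, ⟨w, hw, u, hu, rfl⟩, rfl⟩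
      exact ⟨v * w, by simpa using hw, u, hu, by simp [mul_smul]⟩
    · rintro ⟨w, hw, u, hu, rfl⟩
      exact ⟨φ (v⁻¹ * w) • u, ⟨_, hw, u, hu, rfl⟩, by simp [mul_smul]⟩
  have hTd : ∀ S S' : Set (FreeGroup Bool), (∀ w ∈ S, w ∉ S') → Disjoint (T S) (T S') := by
    intro S S' h
    rw [Set.disjoint_left]
    rintro _ ⟨w, hw, u, hu, rfl⟩ ⟨w', hw', u', hu', h'⟩
    have := key _ _ u' hu' u hu h'
    subst this
    exact h _ hw hw'
  have hY : ∀ v, φ v • T Set.univ = T Set.univ := by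
    intro v; rw [hTs]; rfl
  refine ⟨T auxS, T Set.univ, φ (FreeGroup.of false), φ 1, φ (FreeGroup.of true),
    φ (FreeGroup.of true * FreeGroup.of true), ⟨z, 1, ?_, z, hzU, by simp⟩, hTo _, hTo _, ?_,
    ?_, ?_, ?_, ?_, hY _, hY _, hY _, hY _⟩
  · intro y hy; simp at hy
  · rintro _ ⟨w, hw, h⟩; exact ⟨w, trivial, h⟩
  · rw [hTs]
    ext x
    constructor
    · rintro ⟨w, -, h⟩
      by_cases hw : w ∈ auxS
      · exact Or.inl ⟨w, hw, h⟩
      · exact Or.inr ⟨w, auxS_a w hw, h⟩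
    · rintro (⟨w, -, h⟩ | ⟨w, -, h⟩) <;> exact ⟨w, trivial, h⟩
  · rw [hTs, hTs]
    apply hTd
    intro w hw hw'
    apply (auxS_b _ hw').1
    simpa using hw
  · rw [hTs, hTs]
    apply hTd
    intro w hw hw'
    apply (auxS_b _ hw').2
    simpa [mul_assoc] using hw
  · rw [hTs, hTs]
    apply hTd
    intro w hw hw'
    apply (auxS_b _ hw').1
    simpa [mul_assoc] using hw
end

section
/- Let G be a group acting by homeomorphisms on a topological space X. Suppose there exist nonempty open subsets A ⊆ Y ⊆ X and elements a, a₀, a₁, a₂, a₃, a₄ ∈ G such that Y = A ∪ a • A, the sets a₀ • A, a₁ • A, a₂ • A, a₃ • A, a₄ • A are pairwise disjoint, and Y is invariant under a and under each aᵢ (i = 0, …, 4). Let F be the subgroup of G generated by f₁ = a₁ a a₂⁻¹ and f₂ = a₃ a a₄⁻¹. Then the set Z = F • (a₀ • A) = ⋃_{h ∈ F} h • (a₀ • A) is a nonempty open F-invariant subset of X, and F acts properly discontinuously on Z: for every z ∈ Z there is an open neighborhood U ⊆ Z of z such that (h • U) ∩ U = ∅ for all h ∈ F with h ≠ 1. 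-/
open Pointwise

inductive PPWord {G L : Type*} [Group G] (g : L → G) (i : L → L) : Option L → G → Prop
  | nil : PPWord g i none 1
  | cons (s : L) (o : Option L) (h : G) : PPWord g i o h → o ≠ some (i s) →
      PPWord g i (some s) (g s * h)

theorem PPWord.step {G L : Type*} [Group G] {g : L → G} {i : L → L}
    (hg : ∀ s, g (i s) = (g s)⁻¹) {o : Option L} {h : G} (H : PPWord g i o h) (s : L) :
    ∃ o', PPWord g i o' (g s * h) := by
  by_cases ho : o = some (i s)
  · subst ho
    cases H with
    | cons _ o' h' H' _ =>
      refine ⟨o', ?_⟩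
      rw [hg, mul_inv_cancel_left]
      exact H'
  · exact ⟨_, PPWord.cons s o h H ho⟩

theorem PPWord.image {G L X : Type*} [Group G] [MulAction G X] {g : L → G} {i : L → L}
    (B : Set X) (T : L → Set X)
    (hBT : ∀ s, ∀ x ∈ B, x ∉ T s) (hTT : ∀ s t, s ≠ t → ∀ x ∈ T s, x ∉ T t)
    (Y : Set X) (hBY : B ⊆ Y) (hTY : ∀ s, T s ⊆ Y)
    (hp : ∀ s, ∀ y ∈ Y, y ∉ T (i s) → g s • y ∈ T s)
    {o : Option L} {h : G} (H : PPWord g i o h) :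
    (o = none ∧ h = 1) ∨ ∃ s, o = some s ∧ ∀ x ∈ B, h • x ∈ T s := by
  induction H with
  | nil => exact Or.inl ⟨rfl, rfl⟩
  | cons s o h H ho ih =>
    refine Or.inr ⟨s, rfl, fun x hx => ?_⟩
    rw [mul_smul]
    rcases ih with ⟨_, rfl⟩ | ⟨t, rfl, ht⟩
    · rw [one_smul]
      exact hp s x (hBY hx) (hBT _ x hx)
    · exact hp s _ (hTY t (ht x hx)) (hTT t (i s) (fun e => ho (by rw [e])) _ (ht x hx))

theorem pp_pos {G X : Type*} [Group G] [MulAction G X] (A Y : Set X) (a p q : G)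
    (hY : Y = A ∪ a • A) (ha : a • Y = Y) (hq : q • Y = Y) (y : X) (hy : y ∈ Y)
    (hn : y ∉ q • A) : (p * a * q⁻¹) • y ∈ p • A := by
  rw [mul_assoc, mul_smul, Set.smul_mem_smul_set_iff, mul_smul]
  rw [Set.mem_smul_set_iff_inv_smul_mem] at hn
  rw [← hq, Set.mem_smul_set_iff_inv_smul_mem] at hy
  have h2 : a • (q⁻¹ • y) ∈ Y := by
    rw [← ha]; exact Set.smul_mem_smul_set hy
  rw [hY] at h2
  rcases h2 with h2 | h2
  · exact h2
  · rw [Set.smul_mem_smul_set_iff] at h2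
    exact absurd h2 hn

theorem pp_neg {G X : Type*} [Group G] [MulAction G X] (A Y : Set X) (a p q : G)
    (hY : Y = A ∪ a • A) (hp : p • Y = Y) (y : X) (hy : y ∈ Y)
    (hn : y ∉ p • A) : (p * a * q⁻¹)⁻¹ • y ∈ q • A := by
  have e : (p * a * q⁻¹)⁻¹ = q * (a⁻¹ * p⁻¹) := by group
  rw [e, mul_smul, Set.smul_mem_smul_set_iff, mul_smul]
  rw [Set.mem_smul_set_iff_inv_smul_mem] at hn
  rw [← hp, Set.mem_smul_set_iff_inv_smul_mem, hY] at hy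
  rcases hy with h2 | h2
  · exact absurd h2 hn
  · rwa [Set.mem_smul_set_iff_inv_smul_mem] at h2


theorem stmt_18 {G X : Type*} [Group G] [TopologicalSpace X] [MulAction G X]
    (hcont : ∀ g : G, Continuous fun x : X => g • x)
    (A Y : Set X) (hAne : A.Nonempty) (hAopen : IsOpen A) (hYopen : IsOpen Y)
    (hAY : A ⊆ Y)
    (a a0 a1 a2 a3 a4 : G)
    (hY : Y = A ∪ a • A)
    (h01 : Disjoint (a0 • A) (a1 • A))
    (h02 : Disjoint (a0 • A) (a2 • A))
    (h03 : Disjoint (a0 • A) (a3 • A))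
    (h04 : Disjoint (a0 • A) (a4 • A))
    (h12 : Disjoint (a1 • A) (a2 • A))
    (h13 : Disjoint (a1 • A) (a3 • A))
    (h14 : Disjoint (a1 • A) (a4 • A))
    (h23 : Disjoint (a2 • A) (a3 • A))
    (h24 : Disjoint (a2 • A) (a4 • A))
    (h34 : Disjoint (a3 • A) (a4 • A))
    (ha : a • Y = Y) (ha0 : a0 • Y = Y) (ha1 : a1 • Y = Y)
    (ha2 : a2 • Y = Y) (ha3 : a3 • Y = Y) (ha4 : a4 • Y = Y)
    (F : Subgroup G) (hF : F = Subgroup.closure {a1 * a * a2⁻¹, a3 * a * a4⁻¹})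
    (Z : Set X) (hZ : Z = ⋃ h ∈ (F : Set G), h • (a0 • A)) :
    Z.Nonempty ∧ IsOpen Z ∧ (∀ h ∈ F, h • Z = Z) ∧
    ∀ z ∈ Z, ∃ U, U ⊆ Z ∧ IsOpen U ∧ z ∈ U ∧
      ∀ h ∈ F, h ≠ 1 → (h • U) ∩ U = ∅ := by
  have hop : ∀ (g : G) (S : Set X), IsOpen S → IsOpen (g • S) := by
    intro g S hS
    rw [← Set.preimage_smul_inv]
    exact hS.preimage (hcont g⁻¹)
  have hsub : ∀ p : G, p • Y = Y → p • A ⊆ Y := by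
    intro p hp
    rw [← hp]
    exact Set.smul_set_mono hAY
  have key : ∀ h ∈ F, h ≠ 1 → Disjoint (h • (a0 • A)) (a0 • A) := by
    let g : Bool × Bool → G := fun s => match s with
      | (true, true) => a1 * a * a2⁻¹
      | (true, false) => (a1 * a * a2⁻¹)⁻¹
      | (false, true) => a3 * a * a4⁻¹
      | (false, false) => (a3 * a * a4⁻¹)⁻¹
    let T : Bool × Bool → Set X := fun s => match s with
      | (true, true) => a1 • A
      | (true, false) => a2 • A
      | (false, true) => a3 • A
      | (false, false) => a4 • A
    let i : Bool × Bool → Bool × Bool := fun s => (s.1, !s.2)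
    have hg : ∀ s, g (i s) = (g s)⁻¹ := by
      rintro ⟨_ | _, _ | _⟩ <;> simp only [g, i, Bool.not_true, Bool.not_false, inv_inv]
    have hBT : ∀ s, ∀ x ∈ a0 • A, x ∉ T s := by
      rintro ⟨_ | _, _ | _⟩ x hx
      · exact Set.disjoint_left.1 h04 hx
      · exact Set.disjoint_left.1 h03 hx
      · exact Set.disjoint_left.1 h02 hx
      · exact Set.disjoint_left.1 h01 hx
    have hTT : ∀ s t, s ≠ t → ∀ x ∈ T s, x ∉ T t := by
      rw [Set.disjoint_left] at h12 h13 h14 h23 h24 h34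
      rintro ⟨_ | _, _ | _⟩ ⟨_ | _, _ | _⟩ hst x hx hx' <;>
        first
        | exact absurd rfl hst
        | exact h12 hx hx'
        | exact h13 hx hx'
        | exact h14 hx hx'
        | exact h23 hx hx'
        | exact h24 hx hx'
        | exact h34 hx hx'
        | exact h12 hx' hx
        | exact h13 hx' hx
        | exact h14 hx' hx
        | exact h23 hx' hx
        | exact h24 hx' hx
        | exact h34 hx' hx
    have hTY : ∀ s, T s ⊆ Y := by
      rintro ⟨_ | _, _ | _⟩
      · exact hsub _ ha4
      · exact hsub _ ha3
      · exact hsub _ ha2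
      · exact hsub _ ha1
    have hp : ∀ s, ∀ y ∈ Y, y ∉ T (i s) → g s • y ∈ T s := by
      rintro ⟨_ | _, _ | _⟩ y hy hn
      · exact pp_neg A Y a a3 a4 hY ha3 y hy hn
      · exact pp_pos A Y a a3 a4 hY ha ha4 y hy hn
      · exact pp_neg A Y a a1 a2 hY ha1 y hy hn
      · exact pp_pos A Y a a1 a2 hY ha ha2 y hy hn
    have hw : ∀ h ∈ F, ∃ o, PPWord g i o h := by
      intro h hh
      rw [hF] at hh
      induction hh using Subgroup.closure_induction_left with
      | one => exact ⟨none, PPWord.nil⟩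
      | mul_left x hx y hy ih =>
        obtain ⟨o, ho⟩ := ih
        rcases hx with rfl | rfl
        · exact ho.step hg (true, true)
        · exact ho.step hg (false, true)
      | inv_mul_cancel x hx y hy ih =>
        obtain ⟨o, ho⟩ := ih
        rcases hx with rfl | rfl
        · exact ho.step hg (true, false)
        · exact ho.step hg (false, false)
    intro h hh h1
    obtain ⟨o, ho⟩ := hw h hh
    rcases PPWord.image (a0 • A) T hBT hTT Y (hsub _ ha0) hTY hp ho with ⟨_, e⟩ | ⟨s, _, hs⟩
    · exact absurd e h1
    · rw [Set.disjoint_left]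
      rintro _ ⟨x, hx, rfl⟩ hx'
      exact hBT s _ hx' (hs x hx)
  have hmem : ∀ z, z ∈ Z ↔ ∃ h ∈ F, z ∈ h • (a0 • A) := by
    intro z
    simp [hZ]
  have hinv : ∀ h ∈ F, ∀ z ∈ Z, h • z ∈ Z := by
    intro h hh z hz
    obtain ⟨k, hk, hz⟩ := (hmem z).1 hz
    refine (hmem _).2 ⟨h * k, F.mul_mem hh hk, ?_⟩
    rw [mul_smul]
    exact Set.smul_mem_smul_set hz
  refine ⟨?_, ?_, ?_, ?_⟩
  · obtain ⟨x, hx⟩ := hAne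
    refine ⟨a0 • x, (hmem _).2 ⟨1, F.one_mem, ?_⟩⟩
    rw [one_smul]
    exact Set.smul_mem_smul_set hx
  · rw [hZ]
    exact isOpen_biUnion fun h _ => hop _ _ (hop _ _ hAopen)
  · intro h hh
    ext z
    rw [Set.mem_smul_set_iff_inv_smul_mem]
    refine ⟨fun H => ?_, fun H => hinv _ (F.inv_mem hh) _ H⟩
    have := hinv h hh _ H
    rwa [smul_inv_smul] at this
  · intro z hz
    obtain ⟨k, hk, hzk⟩ := (hmem z).1 hz
    refine ⟨k • (a0 • A), fun x hx => (hmem x).2 ⟨k, hk, hx⟩,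
      hop _ _ (hop _ _ hAopen), hzk, ?_⟩
    intro h hh h1
    have hd := key (k⁻¹ * h * k) (F.mul_mem (F.mul_mem (F.inv_mem hk) hh) hk) (by
      intro e
      apply h1
      have : h = k * (k⁻¹ * h * k) * k⁻¹ := by group
      rw [this, e]
      group)
    rw [Set.disjoint_left] at hd
    rw [Set.eq_empty_iff_forall_notMem]
    rintro x ⟨hx1, hx2⟩
    rw [Set.mem_smul_set_iff_inv_smul_mem] at hx2
    refine hd ?_ hx2
    rw [mul_smul, mul_smul]
    exact Set.smul_mem_smul_set hx1
end
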